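/- The rule set R_M is bts if and only if the 3CM M halts. -/

import Mathlib

set_option maxHeartbeats 1000000
set_option synthInstance.maxHeartbeats 1000000
set_option synthInstance.maxSize 512

attribute [local instance] Classical.propDecidable

noncomputable section

/-! ### Terms and atoms -/

/-- Variables: ordinary variables `Sum.inl n`, or fresh variables `Sum.inr (c, k)`
introduced by the trigger with code `c` for the head variable with code `k`. -/
abbrev Var : Type := ℕ ⊕ (ℕ × ℕ)

/-- Terms: constants `Sum.inl c` or variables `Sum.inr v`. -/
abbrev FTerm : Type := ℕ ⊕ Var

def ct (n : ℕ) : FTerm := Sum.inl n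
def vt (n : ℕ) : FTerm := Sum.inr (Sum.inl n)

/-- An atom: a predicate name together with its list of arguments. -/
abbrev Atom : Type := ℕ × List FTerm

/-- Active domain: all terms occurring in an atom set. -/
def adom (J : Set Atom) : Set FTerm := {t | ∃ a ∈ J, t ∈ a.2}

def atomVarsF (a : Atom) : Finset Var := (a.2.filterMap Sum.getRight?).toFinset

def varsF (A : Finset Atom) : Finset Var := A.biUnion atomVarsF

def setVars (J : Set Atom) : Set Var := {v | ∃ a ∈ J, Sum.inr v ∈ a.2}

/-! ### Substitutions and homomorphisms -/

abbrev Subst := Var → FTerm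

def applyT (σ : Subst) : FTerm → FTerm
  | Sum.inl c => Sum.inl c
  | Sum.inr v => σ v

def applyA (σ : Subst) (a : Atom) : Atom := (a.1, a.2.map (applyT σ))

def IsHomOn (σ : Subst) (A B : Set Atom) : Prop := ∀ a ∈ A, applyA σ a ∈ B

def HomBetween (A B : Set Atom) : Prop := ∃ σ : Subst, IsHomOn σ A B

def IsRetraction (σ : Subst) (A B : Set Atom) : Prop :=
  IsHomOn σ A B ∧ ∀ v ∈ setVars A ∩ setVars B, σ v = Sum.inr v

/-- Isomorphism of atom sets: a pair of mutually inverse homomorphisms. -/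
def Isomorphic (A B : Set Atom) : Prop :=
  ∃ σ τ : Subst, IsHomOn σ A B ∧ IsHomOn τ B A ∧
    (∀ a ∈ A, applyA τ (applyA σ a) = a) ∧ (∀ b ∈ B, applyA σ (applyA τ b) = b)

/-! ### Rules -/

/-- A rule is a pair (body, head). Its existential variables are the head variables
not occurring in the body; its frontier the variables shared by body and head.
A rule is Datalog when every head variable occurs in the body. -/
abbrev Rule : Type := Finset Atom × Finset Atom

def frontierOf (R : Rule) : Finset Var := varsF R.1 ∩ varsF R.2

def DatRules (Rset : Finset Rule) : Finset Rule := Rset.filter fun R => varsF R.2 ⊆ varsF R.1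
def NDatRules (Rset : Finset Rule) : Finset Rule := Rset.filter fun R => ¬ varsF R.2 ⊆ varsF R.1

/-- Satisfaction of a rule in an atom set. -/
def SatisfiesRule (J : Set Atom) (R : Rule) : Prop :=
  ∀ σ : Subst, IsHomOn σ (R.1 : Set Atom) J →
    ∃ σ' : Subst, (∀ v ∈ varsF R.1, σ' v = σ v) ∧ IsHomOn σ' (R.2 : Set Atom) J

def IsModel (Rset : Finset Rule) (I J : Set Atom) : Prop :=
  (∀ R ∈ Rset, SatisfiesRule J R) ∧ HomBetween I J

/-- BCQ entailment: every model of the KB satisfies the query. -/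
def Entails (Rset : Finset Rule) (I q : Set Atom) : Prop :=
  ∀ J : Set Atom, IsModel Rset I J → HomBetween q J

def IsUniversalModel (Rset : Finset Rule) (I U : Set Atom) : Prop :=
  IsModel Rset I U ∧ ∀ J : Set Atom, IsModel Rset I J → HomBetween U J

/-! ### Triggers -/

structure Trigger where
  rule : Rule
  sub : Subst

/-- Injective code of a trigger (a trigger is determined by its rule and the
restriction of its substitution to the body variables). -/
def Trigger.code (t : Trigger) : ℕ :=
  Encodable.encode (t.rule, (varsF t.rule.1).image fun v => (v, t.sub v))

/-- The canonical extension of the trigger substitution, mapping each existential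
variable `z` to the fresh variable unique for `z` and the trigger. -/
def Trigger.extSub (t : Trigger) : Subst := fun v =>
  if v ∈ varsF t.rule.1 then t.sub v
  else Sum.inr (Sum.inr (t.code, Encodable.encode v))

def Trigger.out (t : Trigger) : Finset Atom := t.rule.2.image (applyA t.extSub)

def Trigger.isOn (t : Trigger) (J : Set Atom) : Prop := IsHomOn t.sub (t.rule.1 : Set Atom) J

/-! ### Chase variants, derivations, chase termination classes -/

inductive ChaseVariant : Type
  | O | SO | R | E
deriving DecidableEq

def Applicable : ChaseVariant → Trigger → Set Atom → Prop
  | .O, t, J => ¬ ((t.out : Set Atom) ⊆ J)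
  | .SO, t, J => ∀ t' : Trigger, t'.rule = t.rule → t'.isOn J →
      (∀ v ∈ frontierOf t.rule, t'.sub v = t.sub v) → ¬ ((t'.out : Set Atom) ⊆ J)
  | .R, t, J => ¬ ∃ σ : Subst, IsRetraction σ (J ∪ (t.out : Set Atom)) J
  | .E, t, J => ¬ ∃ σ : Subst, IsHomOn σ (J ∪ (t.out : Set Atom)) J

def instSeq (I : Set Atom) (steps : ℕ → Option Trigger) : ℕ → Set Atom
  | 0 => I
  | n + 1 => instSeq I steps n ∪
      (match steps n with
        | none => (∅ : Set Atom)
        | some t => (t.out : Set Atom))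

/-- A (possibly infinite) derivation from the knowledge base `⟨Rset, I⟩`. -/
structure Deriv (Rset : Finset Rule) (I : Set Atom) where
  steps : ℕ → Option Trigger
  prefix_closed : ∀ n, steps n = none → steps (n + 1) = none
  valid : ∀ n t, steps n = some t →
    t.rule ∈ Rset ∧ t.isOn (instSeq I steps n) ∧ ¬ ((t.out : Set Atom) ⊆ instSeq I steps n)

def Deriv.inst {Rset : Finset Rule} {I : Set Atom} (D : Deriv Rset I) (n : ℕ) :
    Set Atom := instSeq I D.steps n

def Deriv.res {Rset : Finset Rule} {I : Set Atom} (D : Deriv Rset I) : Set Atom :=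
  ⋃ n, D.inst n

def Deriv.Finite {Rset : Finset Rule} {I : Set Atom} (D : Deriv Rset I) : Prop :=
  ∃ n, D.steps n = none

def Deriv.IsX {Rset : Finset Rule} {I : Set Atom} (X : ChaseVariant)
    (D : Deriv Rset I) : Prop :=
  ∀ n t, D.steps n = some t → Applicable X t (D.inst n)

def Deriv.Fair {Rset : Finset Rule} {I : Set Atom} (X : ChaseVariant)
    (D : Deriv Rset I) : Prop :=
  ∀ i, ∀ t : Trigger, t.rule ∈ Rset → t.isOn (D.inst i) → Applicable X t (D.inst i) →
    ∃ j, i < j ∧ ¬ Applicable X t (D.inst j)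

/-- All-instance, all-derivation chase termination. -/
def CTall (X : ChaseVariant) (Rset : Finset Rule) : Prop :=
  ∀ I : Finset Atom, ∀ D : Deriv Rset (I : Set Atom), D.IsX X → D.Fair X → D.Finite

/-- All-instance, some-derivation chase termination. -/
def CTex (X : ChaseVariant) (Rset : Finset Rule) : Prop :=
  ∀ I : Finset Atom, ∃ D : Deriv Rset (I : Set Atom), D.IsX X ∧ D.Fair X ∧ D.Finite

inductive CTQuant : Type
  | all | ex

def CT (X : ChaseVariant) : CTQuant → Finset Rule → Prop
  | .all => CTall X
  | .ex => CTex X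

/-- The result of some fair `X`-derivation from `⟨Rset, J⟩`. -/
def ChX (X : ChaseVariant) (Rset : Finset Rule) (J : Set Atom) : Set Atom :=
  if h : ∃ D : Deriv Rset J, D.IsX X ∧ D.Fair X then h.choose.res else J

/-! ### Gaifman graph, treewidth, bts -/

def gaifmanAdj (J : Set Atom) (u v : FTerm) : Prop :=
  u ≠ v ∧ ∃ a ∈ J, u ∈ a.2 ∧ v ∈ a.2

/-- The (Gaifman graph of the) atom set `J` has treewidth at most `k`:
there is a tree decomposition all of whose bags have size at most `k + 1`. -/
def TreewidthAtMost (J : Set Atom) (k : ℕ) : Prop :=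
  ∃ (ι : Type) (T : SimpleGraph ι) (bag : ι → Finset FTerm),
    T.Connected ∧ T.IsAcyclic ∧
    (∀ v ∈ adom J, ∃ i, v ∈ bag i) ∧
    (∀ u v : FTerm, gaifmanAdj J u v → ∃ i, u ∈ bag i ∧ v ∈ bag i) ∧
    (∀ v : FTerm, (SimpleGraph.induce {i | v ∈ bag i} T).Preconnected) ∧
    (∀ i, (bag i).card ≤ k + 1)

/-- Bounded-treewidth sets: for every instance, some universal model of bounded treewidth. -/
def IsBts (Rset : Finset Rule) : Prop :=
  ∀ I : Finset Atom, ∃ (k : ℕ) (U : Set Atom),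
    IsUniversalModel Rset (I : Set Atom) U ∧ TreewidthAtMost U k

/-! ### Three-counter machines -/

/-- A three-counter machine: states `0, …, m − 1` (state `0` is initial, standing for `q₁`),
and a partial transition function given by a finite table. -/
structure TCM where
  m : ℕ
  hm : 0 < m
  δ : List ((ℕ × Bool × Bool) × (ℕ × Int × Int))
  keys_nodup : (δ.map Prod.fst).Nodup
  wf : ∀ e ∈ δ, e.1.1 < m ∧ e.2.1 < m ∧ e.2.2.1.natAbs ≤ 1 ∧ e.2.2.2.natAbs ≤ 1

/-- A configuration: state, two counters, and the time counter. -/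
abbrev Config : Type := ℕ × ℕ × ℕ × ℕ

def TCM.step (M : TCM) (q : ℕ) (b1 b2 : Bool) : Option (ℕ × Int × Int) :=
  (M.δ.find? fun e => decide (e.1 = (q, b1, b2))).map Prod.snd

def TCM.next (M : TCM) (C : Config) : Option Config :=
  match M.step C.1 (decide (C.2.1 ≠ 0)) (decide (C.2.2.1 ≠ 0)) with
  | none => none
  | some (q', d1, d2) =>
      some (q', ((C.2.1 : ℤ) + d1).toNat, ((C.2.2.1 : ℤ) + d2).toNat, C.2.2.2 + 1)

def TCM.run (M : TCM) : ℕ → Option Config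
  | 0 => some (0, 0, 0, 0)
  | n + 1 => (M.run n).bind M.next

/-- The machine halts: some reachable configuration has no successor. -/
def TCM.Halts (M : TCM) : Prop := ∃ n C, M.run n = some C ∧ M.next C = none

/-! ### Prime encoding of configurations -/

/-- The least prime strictly greater than `n` (computably). -/
def nextPrime (n : ℕ) : ℕ := Nat.find (Nat.exists_infinite_primes (n + 1))

/-- `prm i` is the `(i+1)`-st prime `p_{i+1}`, i.e. `prm 0 = 2`. -/
def prm : ℕ → ℕ
  | 0 => 2
  | k + 1 => nextPrime (prm k)

/-- Encoding of a configuration as a natural number. -/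
def TCM.enc (M : TCM) (C : Config) : ℕ :=
  prm C.1 * prm M.m ^ C.2.1 * prm (M.m + 1) ^ C.2.2.1 * prm (M.m + 2) ^ C.2.2.2

/-- `p = p₁ ⋯ p_{m+3}`. -/
def TCM.p (M : TCM) : ℕ := ∏ i ∈ Finset.range (M.m + 3), prm i

/-- Decode the state from a residue modulo `M.p`. -/
def TCM.stateOf (M : TCM) (i : ℕ) : Option ℕ :=
  (List.range M.m).find? fun s => decide (prm s ∣ i)

/-- The canonical pair `(q_i, r_i)` realizing the prime encoding of the transitions. -/
def TCM.qr (M : TCM) (i : ℕ) : ℕ × ℕ :=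
  match M.stateOf i with
  | none => (1, 1)
  | some s =>
      let b1 : Bool := decide (prm M.m ∣ i)
      let b2 : Bool := decide (prm (M.m + 1) ∣ i)
      match M.step s b1 b2 with
      | none => (1, 1)
      | some (s', d1, d2) =>
          let e1 : ℤ := if b1 then d1 else max d1 0
          let e2 : ℤ := if b2 then d2 else max d2 0
          let num : ℕ := prm s' * prm (M.m + 2) *
            (if e1 = 1 then prm M.m else 1) * (if e2 = 1 then prm (M.m + 1) else 1)
          let den : ℕ := prm s *
            (if e1 = -1 then prm M.m else 1) * (if e2 = -1 then prm (M.m + 1) else 1)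
          (num / Nat.gcd num den, den / Nat.gcd num den)

def TCM.qi (M : TCM) (i : ℕ) : ℕ := (M.qr i).1
def TCM.ri (M : TCM) (i : ℕ) : ℕ := (M.qr i).2

/-- `g(n) = q_{n mod p} · n / r_{n mod p}`. -/
def TCM.g (M : TCM) (n : ℕ) : ℕ := M.qi (n % M.p) * n / M.ri (n % M.p)

/-- `gᵏ(2)`. -/
def TCM.gIter (M : TCM) (k : ℕ) : ℕ := (M.g)^[k] 2

/-- `G = {gᵏ(2) : k ∈ ℕ}`. -/
def TCM.Gset (M : TCM) : Set ℕ := Set.range M.gIter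

/-! ### The rule set `R_M` -/

def pEnd : ℕ := 0
def pFlood : ℕ := 1
def pS0 : ℕ := 2
def pS : ℕ := 3
def pG : ℕ := 4
def pR (i : ℕ) : ℕ := 5 + 2 * i
def pT (i : ℕ) : ℕ := 6 + 2 * i

/-- `j`-th vertex of an `S`-path of length `n` from variable `a` to variable `b`
with fresh intermediate variables `base + 1, …, base + n − 1`. -/
def pathVar (a b base n j : ℕ) : FTerm :=
  if j = 0 then vt a else if j = n then vt b else vt (base + j)

/-- The atoms of `Sⁿ(x_a, x_b)`: an `S`-path of length `n`. -/
def spath (a b base n : ℕ) : Finset Atom :=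
  (Finset.range n).image fun j =>
    (pS, [pathVar a b base n j, pathVar a b base n (j + 1)])

/-- Rule (1): `S₀(x,y) → S(x,y)`. -/
def ruleS : Rule := ({(pS0, [vt 0, vt 1])}, {(pS, [vt 0, vt 1])})

/-- Rule (2): `R_i(x,y) ∧ S(y,z) → R_{i+1}(x,z)` (indices modulo `p`). -/
def ruleR (M : TCM) (i : ℕ) : Rule :=
  ({(pR i, [vt 0, vt 1]), (pS, [vt 1, vt 2])}, {(pR ((i + 1) % M.p), [vt 0, vt 2])})

/-- Rule (3): `T_i(x,y,z) ∧ S^{r_i}(y,y′) ∧ S^{q_i}(z,z′) → T_i(x,y′,z′)`. -/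
def ruleT (M : TCM) (i : ℕ) : Rule :=
  (({(pT i, [vt 0, vt 1, vt 2])} : Finset Atom) ∪ spath 1 3 10 (M.ri i) ∪
      spath 2 4 (11 + M.ri i) (M.qi i),
    {(pT i, [vt 0, vt 3, vt 4])})

/-- Rule (4): `S(x,y) → Flood(y)`. -/
def ruleFloodProp : Rule := ({(pS, [vt 0, vt 1])}, {(pFlood, [vt 1])})

/-- Rule (5): `End(x) → S(x,x)`. -/
def ruleSEnd : Rule := ({(pEnd, [vt 0])}, {(pS, [vt 0, vt 0])})

/-- Rule (6): `S²(x,y) → G(x,y)`. -/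
def ruleGInit : Rule := (spath 0 1 10 2, {(pG, [vt 0, vt 1])})

/-- Rule (7): `G(x,y) ∧ R_i(x,y) ∧ T_i(x,y,z) → G(x,z)`. -/
def ruleGStep (i : ℕ) : Rule :=
  ({(pG, [vt 0, vt 1]), (pR i, [vt 0, vt 1]), (pT i, [vt 0, vt 1, vt 2])},
    {(pG, [vt 0, vt 2])})

/-- Rule (8): `Flood(x) ∧ Flood(y) ∧ Flood(z) → G(x,y) ∧ ⋀_{j<p} (R_j(x,y) ∧ T_j(x,y,z))`. -/
def ruleFloodGen (M : TCM) : Rule :=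
  ({(pFlood, [vt 0]), (pFlood, [vt 1]), (pFlood, [vt 2])},
    ({(pG, [vt 0, vt 1])} : Finset Atom) ∪
      (Finset.range M.p).biUnion fun j =>
        {(pR j, [vt 0, vt 1]), (pT j, [vt 0, vt 1, vt 2])})

/-- Rule (9): `G(y,z) ∧ End(z) → ∃x (S₀(x,y) ∧ R₀(x,x) ∧ ⋀_{j<p} T_j(x,x,x))`. -/
def ruleEx (M : TCM) : Rule :=
  ({(pG, [vt 1, vt 2]), (pEnd, [vt 2])},
    ({(pS0, [vt 0, vt 1]), (pR 0, [vt 0, vt 0])} : Finset Atom) ∪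
      (Finset.range M.p).biUnion fun j => {(pT j, [vt 0, vt 0, vt 0])})

/-- The rule set `R_M`. -/
def RM (M : TCM) : Finset Rule :=
  ({ruleS, ruleFloodProp, ruleSEnd, ruleGInit, ruleFloodGen M, ruleEx M} : Finset Rule) ∪
    (Finset.range M.p).biUnion fun i => {ruleR M i, ruleT M i, ruleGStep i}

/-- The alternating Datalog/non-Datalog chase steps `Step^X_n`. -/
def StepX (X : ChaseVariant) (M : TCM) : ℕ → Set Atom → Set Atom
  | 0, I => ChX X (DatRules (RM M)) I
  | n + 1, I => ChX X (DatRules (RM M)) (ChX X (NDatRules (RM M)) (StepX X M n I))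

/-- The constant `w`, the "well of positivity". -/
def wC : FTerm := ct 0

/-- The instance `{End(w)}`. -/
def IE : Set Atom := {(pEnd, [wC])}

/-- Membership in the signature of `R_M` (predicate together with its arity). -/
def InSig (M : TCM) (a : Atom) : Prop :=
  ((a.1 = pEnd ∨ a.1 = pFlood) ∧ a.2.length = 1) ∨
  ((a.1 = pS0 ∨ a.1 = pS ∨ a.1 = pG ∨ ∃ i < M.p, a.1 = pR i) ∧ a.2.length = 2) ∨
  ((∃ i < M.p, a.1 = pT i) ∧ a.2.length = 3)

/-- The critical instance: all atoms `P(w, …, w)` over the signature of `R_M`. -/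
def Crit (M : TCM) : Set Atom := {a | InSig M a ∧ ∀ t ∈ a.2, t = wC}

/-- An `S`-path of length `k` from `s` to `t` in `J`. -/
def SPath (J : Set Atom) : ℕ → FTerm → FTerm → Prop
  | 0, s, t => s = t
  | k + 1, s, t => ∃ u, (pS, [s, u]) ∈ J ∧ SPath J k u t

/-- The restriction `J|_S`: atoms of `J` all of whose terms belong to `S`. -/
def restrictTo (J : Set Atom) (S : Set FTerm) : Set Atom := {a ∈ J | ∀ t ∈ a.2, t ∈ S}

/-- An explicit injective encoding of three-counter machines by natural numbers. -/
def encodeTCM (M : TCM) : ℕ := Encodable.encode (M.m, M.δ)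


/-!
The numbers `gᵏ(2)` encode the run of `M`, so `M` halts iff they form a finite set; if `M` does
not halt, then `n ≤ gⁿ(2)`.

Rule (9) builds chains `… → x₂ → x₁ → x₀` of `S`-steps whose last term `x₀` satisfies `End` and
carries an `S`-loop. From a term `xₙ` of such a chain, `R_i` and `T_i` count steps and multiply
step counts, so that `G` reaches exactly the terms at distance `gᵏ(2)` from `xₙ`; the chain is
prolonged beyond `xₙ` if one of these distances is at least `n`. If `M` does not halt, then every
model of `{End(w)}` contains an infinite chain, whose terms are distinct in a universal model and
pairwise connected by atoms `R_i`. Such an infinite clique contradicts bounded treewidth, because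
finite families of pairwise intersecting subtrees have a common vertex. If `M` halts, then the
distances `gᵏ(2)` are bounded by some `N`, new terms are nested to depth at most `N`, and the
Skolem chase is a finite universal model.
-/

/-! ### Subtrees of a tree and cliques in bags -/

namespace SubtreeHelly

variable {V : Type*} {G : SimpleGraph V} {A B C : Set V}

/-- Geodesic convexity for trees: `A` contains every path of `G` joining two of its vertices.
In an acyclic graph these are the connected vertex sets, i.e. the subtrees. -/
def PathConvex (G : SimpleGraph V) (A : Set V) : Prop :=
  ∀ ⦃u v⦄, u ∈ A → v ∈ A → ∀ w : G.Walk u v, w.IsPath → ∀ x ∈ w.support, x ∈ A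

lemma PathConvex.inter (hA : PathConvex G A) (hB : PathConvex G B) : PathConvex G (A ∩ B) :=
  fun _ _ hu hv w hw x hx => ⟨hA hu.1 hv.1 w hw x hx, hB hu.2 hv.2 w hw x hx⟩

lemma pathConvex_of_preconnected_induce (hG : G.IsAcyclic) (h : (G.induce A).Preconnected) :
    PathConvex G A := by
  intro u v hu hv w hw x hx
  obtain ⟨p⟩ := h ⟨u, hu⟩ ⟨v, hv⟩
  let q : G.Walk u v := p.map (SimpleGraph.Embedding.induce A).toHom
  have hq : ∀ y ∈ q.support, y ∈ A := by
    intro y hy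
    obtain ⟨z, -, rfl⟩ := List.mem_map.1 (p.support_map _ ▸ hy)
    exact z.2
  have hwq : w = q.bypass := congrArg Subtype.val ((hG.subsingleton_path u v).elim ⟨w, hw⟩ q.toPath)
  exact hq x (q.support_bypass_subset_support (hwq ▸ hx))

lemma isPath_append {u v w : V} {p : G.Walk u v} {q : G.Walk v w} (hp : p.IsPath)
    (hq : q.IsPath) (h : ∀ x ∈ p.support, x ∈ q.support → x = v) : (p.append q).IsPath := by
  have hq' : v ∉ q.support.tail :=
    (List.nodup_cons.1 (q.cons_tail_support.symm ▸ hq.support_nodup)).1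
  rw [SimpleGraph.Walk.isPath_def, SimpleGraph.Walk.support_append]
  refine hp.support_nodup.append hq.support_nodup.tail fun x hxp hxq => ?_
  obtain rfl := h x hxp (List.mem_of_mem_tail hxq)
  exact hq' hxq

/-- The witness is the first vertex of a path `c → b` lying on a path `a → b`. -/
lemma exists_median (hG : G.Connected) (a b c : V) :
    ∃ m, (∃ p : G.Walk a b, p.IsPath ∧ m ∈ p.support) ∧
      (∃ p : G.Walk c b, p.IsPath ∧ m ∈ p.support) ∧
      ∃ p : G.Walk c a, p.IsPath ∧ m ∈ p.support := by
  obtain ⟨P, hP⟩ := (hG.preconnected a b).exists_isPath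
  obtain ⟨Q, hQ⟩ := (hG.preconnected c b).exists_isPath
  obtain ⟨m, hmP, hmQ, hfirst⟩ :=
    Q.exists_mem_support_forall_mem_support_imp_eq P.support.toFinset ⟨b, by simp⟩
  simp only [List.mem_toFinset] at hmP hfirst
  refine ⟨m, ⟨P, hP, hmP⟩, ⟨Q, hQ, hmQ⟩,
    (Q.takeUntil m hmQ).append (P.takeUntil m hmP).reverse, ?_, by simp⟩
  refine isPath_append (hQ.takeUntil hmQ) (hP.takeUntil hmP).reverse fun x hxQ hxP => ?_
  rw [SimpleGraph.Walk.support_reverse, List.mem_reverse] at hxP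
  exact hfirst x (P.support_takeUntil_subset_support hmP hxP) hxQ

lemma PathConvex.inter_inter_nonempty (hG : G.Connected) (hA : PathConvex G A)
    (hB : PathConvex G B) (hC : PathConvex G C) (hAB : (A ∩ B).Nonempty)
    (hAC : (A ∩ C).Nonempty) (hBC : (B ∩ C).Nonempty) : (A ∩ B ∩ C).Nonempty := by
  obtain ⟨a, haA, haB⟩ := hAB
  obtain ⟨b, hbA, hbC⟩ := hAC
  obtain ⟨c, hcB, hcC⟩ := hBC
  obtain ⟨m, ⟨p, hp, hmp⟩, ⟨q, hq, hmq⟩, r, hr, hmr⟩ := exists_median hG a b c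
  exact ⟨m, ⟨hA haA hbA p hp m hmp, hB hcB haB r hr m hmr⟩, hC hcC hbC q hq m hmq⟩

lemma PathConvex.exists_mem_of_pairwise_inter_nonempty {κ : Type*} (hG : G.Connected)
    {s : Finset κ} (hs : s.Nonempty) {F : κ → Set V} (hF : ∀ i, PathConvex G (F i))
    (h : ∀ i ∈ s, ∀ j ∈ s, (F i ∩ F j).Nonempty) : ∃ x, ∀ i ∈ s, x ∈ F i := by
  induction hs using Finset.Nonempty.cons_induction generalizing F with
  | singleton i =>
    obtain ⟨x, hx, -⟩ := h i (by simp) i (by simp)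
    exact ⟨x, by simpa using hx⟩
  | cons k s hk hs ih =>
    obtain ⟨x, hx⟩ := ih (F := fun i => F i ∩ F k) (fun i => (hF i).inter (hF k))
      fun i hi j hj => by
        have hsub := Finset.subset_cons hk
        have hk' : k ∈ Finset.cons k s hk := Finset.mem_cons_self k s
        rw [← Set.inter_inter_distrib_right]
        exact (hF i).inter_inter_nonempty hG (hF j) (hF k) (h i (hsub hi) j (hsub hj))
          (h i (hsub hi) k hk') (h j (hsub hj) k hk')
    obtain ⟨j, hj⟩ := hs
    exact ⟨x, (Finset.forall_mem_cons hk _).2 ⟨(hx j hj).2, fun i hi => (hx i hi).1⟩⟩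

end SubtreeHelly

section Treewidth

variable {J : Set Atom} {k : ℕ}

lemma TreewidthAtMost.card_le_of_pairwise_gaifmanAdj (h : TreewidthAtMost J k)
    {s : Finset FTerm} (hs : (s : Set FTerm).Pairwise (gaifmanAdj J)) : s.card ≤ k + 1 := by
  obtain ⟨ι, T, bag, hconn, hacyc, -, hedge, hsub, hcard⟩ := h
  by_contra! hlt
  have hnontriv : s.Nontrivial := Finset.one_lt_card_iff_nontrivial.1 (by omega)
  have hmeet : ∀ u ∈ s, ∀ v ∈ s, ({i | u ∈ bag i} ∩ {i | v ∈ bag i}).Nonempty := by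
    intro u hu v hv
    rcases eq_or_ne u v with rfl | huv
    · obtain ⟨w, hw, hwu⟩ := hnontriv.exists_ne u
      obtain ⟨i, hi, -⟩ := hedge u w (hs hu hw hwu.symm)
      exact ⟨i, hi, hi⟩
    · exact hedge u v (hs hu hv huv)
  obtain ⟨i, hi⟩ := SubtreeHelly.PathConvex.exists_mem_of_pairwise_inter_nonempty hconn
    hnontriv.nonempty
    (fun v => SubtreeHelly.pathConvex_of_preconnected_induce hacyc (hsub v)) hmeet
  exact absurd (hcard i) (hlt.trans_le (Finset.card_le_card hi)).not_ge

lemma TreewidthAtMost.finite_of_pairwise_gaifmanAdj (h : TreewidthAtMost J k) {s : Set FTerm}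
    (hs : s.Pairwise (gaifmanAdj J)) : s.Finite := by
  by_contra hinf
  obtain ⟨t, hts, ht⟩ := Set.Infinite.exists_subset_card_eq hinf (k + 2)
  have := h.card_le_of_pairwise_gaifmanAdj (hs.mono hts)
  omega

lemma exists_treewidthAtMost_of_finite_adom (h : (adom J).Finite) :
    ∃ k, TreewidthAtMost J k := by
  have hbag (t : FTerm) : t ∈ adom J → t ∈ h.toFinset := h.mem_toFinset.2
  refine ⟨h.toFinset.card, Unit, ⊥, fun _ => h.toFinset, SimpleGraph.Connected.of_subsingleton,
    SimpleGraph.IsAcyclic.of_subsingleton, fun v hv => ⟨(), hbag v hv⟩, ?_,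
    fun v => SimpleGraph.Preconnected.of_subsingleton, fun _ => Nat.le_succ _⟩
  rintro u v ⟨-, a, ha, hu, hv⟩
  exact ⟨(), hbag u ⟨a, ha, hu⟩, hbag v ⟨a, ha, hv⟩⟩

lemma finite_adom_coe (I : Finset Atom) : (adom I).Finite :=
  (I.finite_toSet.biUnion fun _ _ => List.finite_toSet _).subset
    fun _ ⟨_, ha, ht⟩ => Set.mem_biUnion ha ht

end Treewidth

/-! ### The prime encoding of a run -/

section Primes

lemma lt_nextPrime (n : ℕ) : n < nextPrime n :=
  (Nat.find_spec (Nat.exists_infinite_primes (n + 1))).1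

lemma nextPrime_prime (n : ℕ) : (nextPrime n).Prime :=
  (Nat.find_spec (Nat.exists_infinite_primes (n + 1))).2

lemma prm_prime : ∀ i, (prm i).Prime
  | 0 => Nat.prime_two
  | _ + 1 => nextPrime_prime _

lemma prm_pos (i : ℕ) : 0 < prm i := (prm_prime i).pos

lemma prm_strictMono : StrictMono prm :=
  strictMono_nat_of_lt_succ fun i => lt_nextPrime (prm i)

lemma prm_dvd_prm_iff {i j : ℕ} : prm i ∣ prm j ↔ i = j := by
  rw [Nat.prime_dvd_prime_iff_eq (prm_prime i) (prm_prime j), prm_strictMono.injective.eq_iff]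

lemma prm_dvd_prm_pow_iff {i j e : ℕ} : prm i ∣ prm j ^ e ↔ i = j ∧ e ≠ 0 := by
  rcases eq_or_ne e 0 with rfl | he
  · simp [(prm_prime i).ne_one]
  · rw [(prm_prime i).prime.dvd_pow_iff_dvd he, prm_dvd_prm_iff, and_iff_left he]

end Primes

lemma div_gcd_mul_div_div_gcd {num den : ℕ} (hden : 0 < den) (K : ℕ) :
    num / num.gcd den * (den * K) / (den / num.gcd den) = num * K := by
  have hdvd := Nat.gcd_dvd_right num den
  have hpos : 0 < den / num.gcd den :=
    Nat.div_pos (Nat.le_of_dvd hden hdvd) (Nat.gcd_pos_of_pos_right _ hden)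
  refine Nat.div_eq_of_eq_mul_left hpos ?_
  calc num / num.gcd den * (den * K) = num * den / num.gcd den * K := by
        rw [← mul_assoc, Nat.div_mul_right_comm (Nat.gcd_dvd_left num den)]
    _ = num * K * (den / num.gcd den) := by rw [Nat.mul_div_assoc _ hdvd]; ring

/-- The change that the instruction `d` really causes on a counter: decrementing an empty counter
has no effect. -/
def counterShift (nonempty : Bool) (d : ℤ) : ℤ := if nonempty then d else max d 0

/-- The numerator contributed by the counter with prime `P` when it changes by `e`. -/
def shiftNum (P : ℕ) (e : ℤ) : ℕ := if e = 1 then P else 1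

/-- The denominator contributed by the counter with prime `P` when it changes by `e`. -/
def shiftDen (P : ℕ) (e : ℤ) : ℕ := if e = -1 then P else 1

lemma shiftNum_pos {P : ℕ} (hP : 0 < P) (e : ℤ) : 0 < shiftNum P e := by
  unfold shiftNum; split_ifs <;> omega

lemma shiftDen_pos {P : ℕ} (hP : 0 < P) (e : ℤ) : 0 < shiftDen P e := by
  unfold shiftDen; split_ifs <;> omega

lemma exists_pow_counterShift (P c : ℕ) {d : ℤ} (hd : d.natAbs ≤ 1) :
    ∃ K, P ^ c = shiftDen P (counterShift (decide (c ≠ 0)) d) * P ^ K ∧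
      P ^ ((c : ℤ) + d).toNat = shiftNum P (counterShift (decide (c ≠ 0)) d) * P ^ K := by
  have hcases : d = -1 ∨ d = 0 ∨ d = 1 := by omega
  cases c with
  | zero =>
    rcases hcases with rfl | rfl | rfl <;>
      exact ⟨0, by simp [counterShift, shiftDen, shiftNum]⟩
  | succ c =>
    rcases hcases with rfl | rfl | rfl
    · exact ⟨c, by simp [counterShift, shiftDen, shiftNum, pow_succ']⟩
    · exact ⟨c + 1, by simp [counterShift, shiftDen, shiftNum]⟩
    · have : ((c : ℤ) + 1 + 1).toNat = c + 1 + 1 := by omega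
      exact ⟨c + 1, by simp [counterShift, shiftDen, shiftNum, pow_succ', this]⟩

namespace TCM

variable (M : TCM)

/-- The numerator of the fraction encoding a transition to the state `s'` that changes the
counters by `e₁` and `e₂`, before reduction to lowest terms. -/
def stepNum (s' : ℕ) (e₁ e₂ : ℤ) : ℕ :=
  prm s' * prm (M.m + 2) * shiftNum (prm M.m) e₁ * shiftNum (prm (M.m + 1)) e₂

/-- The denominator of the fraction encoding a transition from the state `s` that changes the
counters by `e₁` and `e₂`, before reduction to lowest terms. -/
def stepDen (s : ℕ) (e₁ e₂ : ℤ) : ℕ :=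
  prm s * shiftDen (prm M.m) e₁ * shiftDen (prm (M.m + 1)) e₂

lemma stepNum_pos (s' : ℕ) (e₁ e₂ : ℤ) : 0 < M.stepNum s' e₁ e₂ :=
  Nat.mul_pos (Nat.mul_pos (Nat.mul_pos (prm_pos _) (prm_pos _)) (shiftNum_pos (prm_pos _) _))
    (shiftNum_pos (prm_pos _) _)

lemma stepDen_pos (s : ℕ) (e₁ e₂ : ℤ) : 0 < M.stepDen s e₁ e₂ :=
  Nat.mul_pos (Nat.mul_pos (prm_pos _) (shiftDen_pos (prm_pos _) _)) (shiftDen_pos (prm_pos _) _)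

lemma p_pos : 0 < M.p := Finset.prod_pos fun i _ => prm_pos i

variable {M}

lemma lt_of_step_eq_some {q b₁ b₂ q' d₁ d₂} (h : M.step q b₁ b₂ = some (q', d₁, d₂)) :
    q' < M.m ∧ d₁.natAbs ≤ 1 ∧ d₂.natAbs ≤ 1 := by
  obtain ⟨e, he, heq⟩ := Option.map_eq_some_iff.1 h
  have hwf := (M.wf e (List.mem_of_find?_eq_some he)).2
  rwa [heq] at hwf

lemma next_eq_none_iff {C : Config} : M.next C = none ↔
    M.step C.1 (decide (C.2.1 ≠ 0)) (decide (C.2.2.1 ≠ 0)) = none := by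
  unfold TCM.next
  cases M.step C.1 (decide (C.2.1 ≠ 0)) (decide (C.2.2.1 ≠ 0)) <;> simp

lemma next_eq_some_iff {C C' : Config} : M.next C = some C' ↔
    ∃ q' d₁ d₂, M.step C.1 (decide (C.2.1 ≠ 0)) (decide (C.2.2.1 ≠ 0)) = some (q', d₁, d₂) ∧
      (q', ((C.2.1 : ℤ) + d₁).toNat, ((C.2.2.1 : ℤ) + d₂).toNat, C.2.2.2 + 1) = C' := by
  unfold TCM.next
  rcases M.step C.1 (decide (C.2.1 ≠ 0)) (decide (C.2.2.1 ≠ 0)) with _ | ⟨q', d₁, d₂⟩ <;>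
    simp [and_assoc]

lemma qr_of_stateOf_eq_none {i : ℕ} (h : M.stateOf i = none) : M.qr i = (1, 1) := by
  simp only [TCM.qr, h]

lemma qr_of_step_eq_none {i s : ℕ} (hs : M.stateOf i = some s)
    (h : M.step s (decide (prm M.m ∣ i)) (decide (prm (M.m + 1) ∣ i)) = none) :
    M.qr i = (1, 1) := by
  simp only [TCM.qr, hs, h]

lemma qr_of_step_eq_some {i s s' : ℕ} {d₁ d₂ : ℤ} (hs : M.stateOf i = some s)
    (h : M.step s (decide (prm M.m ∣ i)) (decide (prm (M.m + 1) ∣ i)) = some (s', d₁, d₂)) :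
    ∃ e₁ e₂, e₁ = counterShift (decide (prm M.m ∣ i)) d₁ ∧
      e₂ = counterShift (decide (prm (M.m + 1) ∣ i)) d₂ ∧
      M.qr i = (M.stepNum s' e₁ e₂ / (M.stepNum s' e₁ e₂).gcd (M.stepDen s e₁ e₂),
        M.stepDen s e₁ e₂ / (M.stepNum s' e₁ e₂).gcd (M.stepDen s e₁ e₂)) :=
  ⟨_, _, rfl, rfl, by simp only [TCM.qr, hs, h]; rfl⟩

variable (M)

lemma exists_qr_eq_div_gcd (i : ℕ) : ∃ num den, 0 < num ∧ 0 < den ∧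
    M.qr i = (num / num.gcd den, den / num.gcd den) := by
  rcases hs : M.stateOf i with _ | s
  · exact ⟨1, 1, one_pos, one_pos, qr_of_stateOf_eq_none hs⟩
  rcases h : M.step s (decide (prm M.m ∣ i)) (decide (prm (M.m + 1) ∣ i)) with _ | ⟨s', d₁, d₂⟩
  · exact ⟨1, 1, one_pos, one_pos, qr_of_step_eq_none hs h⟩
  · obtain ⟨e₁, e₂, -, -, hqr⟩ := qr_of_step_eq_some hs h
    exact ⟨_, _, M.stepNum_pos s' e₁ e₂, M.stepDen_pos s e₁ e₂, hqr⟩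

lemma qi_pos (i : ℕ) : 0 < M.qi i := by
  obtain ⟨num, den, hnum, -, h⟩ := M.exists_qr_eq_div_gcd i
  rw [TCM.qi, h]
  exact Nat.div_pos (Nat.gcd_le_left _ hnum) (Nat.gcd_pos_of_pos_left _ hnum)

lemma ri_pos (i : ℕ) : 0 < M.ri i := by
  obtain ⟨num, den, -, hden, h⟩ := M.exists_qr_eq_div_gcd i
  rw [TCM.ri, h]
  exact Nat.div_pos (Nat.gcd_le_right _ hden) (Nat.gcd_pos_of_pos_right _ hden)

variable {M}

lemma prm_dvd_enc_iff {C : Config} {s : ℕ} : prm s ∣ M.enc C ↔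
    s = C.1 ∨ (s = M.m ∧ C.2.1 ≠ 0) ∨ (s = M.m + 1 ∧ C.2.2.1 ≠ 0) ∨
      (s = M.m + 2 ∧ C.2.2.2 ≠ 0) := by
  simp only [TCM.enc, (prm_prime s).dvd_mul, prm_dvd_prm_iff, prm_dvd_prm_pow_iff, or_assoc]

lemma prm_dvd_mod_p_iff {s : ℕ} (hs : s < M.m + 3) {n : ℕ} : prm s ∣ n % M.p ↔ prm s ∣ n :=
  Nat.dvd_mod_iff (Finset.dvd_prod_of_mem prm (Finset.mem_range.2 hs))

lemma prm_dvd_enc_mod_p_iff {C : Config} {s : ℕ} (hs : s < M.m) :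
    prm s ∣ M.enc C % M.p ↔ s = C.1 := by
  rw [prm_dvd_mod_p_iff (by omega), prm_dvd_enc_iff]
  omega

lemma stateOf_enc_mod_p {C : Config} (hC : C.1 < M.m) : M.stateOf (M.enc C % M.p) = some C.1 := by
  refine List.find?_range_eq_some.2
    ⟨by simp [prm_dvd_enc_mod_p_iff hC], List.mem_range.2 hC, fun s hs => ?_⟩
  simp [prm_dvd_enc_mod_p_iff (hs.trans hC), hs.ne]

lemma decide_prm_m_dvd_enc_mod_p {C : Config} (hC : C.1 < M.m) :
    decide (prm M.m ∣ M.enc C % M.p) = decide (C.2.1 ≠ 0) := by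
  rw [decide_eq_decide, prm_dvd_mod_p_iff (by omega), prm_dvd_enc_iff]
  omega

lemma decide_prm_m_add_one_dvd_enc_mod_p {C : Config} (hC : C.1 < M.m) :
    decide (prm (M.m + 1) ∣ M.enc C % M.p) = decide (C.2.2.1 ≠ 0) := by
  rw [decide_eq_decide, prm_dvd_mod_p_iff (by omega), prm_dvd_enc_iff]
  omega

lemma g_enc_of_next_eq_none {C : Config} (hC : C.1 < M.m) (h : M.next C = none) :
    M.g (M.enc C) = M.enc C := by
  rw [next_eq_none_iff, ← decide_prm_m_dvd_enc_mod_p hC,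
    ← decide_prm_m_add_one_dvd_enc_mod_p hC] at h
  simp [TCM.g, TCM.qi, TCM.ri, qr_of_step_eq_none (stateOf_enc_mod_p hC) h]

lemma exists_enc_eq_mul (C : Config) (s' : ℕ) {d₁ d₂ e₁ e₂ : ℤ} (hd₁ : d₁.natAbs ≤ 1)
    (hd₂ : d₂.natAbs ≤ 1) (he₁ : e₁ = counterShift (decide (C.2.1 ≠ 0)) d₁)
    (he₂ : e₂ = counterShift (decide (C.2.2.1 ≠ 0)) d₂) :
    ∃ K, M.enc C = M.stepDen C.1 e₁ e₂ * K ∧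
      M.enc (s', ((C.2.1 : ℤ) + d₁).toNat, ((C.2.2.1 : ℤ) + d₂).toNat, C.2.2.2 + 1) =
        M.stepNum s' e₁ e₂ * K := by
  subst he₁ he₂
  obtain ⟨K₁, hc₁, hc₁'⟩ := exists_pow_counterShift (prm M.m) C.2.1 hd₁
  obtain ⟨K₂, hc₂, hc₂'⟩ := exists_pow_counterShift (prm (M.m + 1)) C.2.2.1 hd₂
  refine ⟨prm M.m ^ K₁ * prm (M.m + 1) ^ K₂ * prm (M.m + 2) ^ C.2.2.2, ?_, ?_⟩
  · rw [TCM.enc, TCM.stepDen, hc₁, hc₂]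
    ring
  · simp only [TCM.enc, TCM.stepNum, hc₁', hc₂']
    ring

lemma g_enc_of_next_eq_some {C C' : Config} (hC : C.1 < M.m) (h : M.next C = some C') :
    M.ri (M.enc C % M.p) ∣ M.enc C ∧ M.g (M.enc C) = M.enc C' := by
  obtain ⟨s', d₁, d₂, hstep, rfl⟩ := next_eq_some_iff.1 h
  obtain ⟨-, hd₁, hd₂⟩ := lt_of_step_eq_some hstep
  rw [← decide_prm_m_dvd_enc_mod_p hC, ← decide_prm_m_add_one_dvd_enc_mod_p hC] at hstep
  obtain ⟨e₁, e₂, he₁, he₂, hqr⟩ := qr_of_step_eq_some (stateOf_enc_mod_p hC) hstep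
  rw [decide_prm_m_dvd_enc_mod_p hC] at he₁
  rw [decide_prm_m_add_one_dvd_enc_mod_p hC] at he₂
  obtain ⟨K, hK, hK'⟩ := exists_enc_eq_mul C s' hd₁ hd₂ he₁ he₂
  rw [TCM.g, TCM.qi, TCM.ri, hqr, hK', hK]
  exact ⟨(Nat.div_dvd_of_dvd (Nat.gcd_dvd_right _ _)).mul_right K,
    div_gcd_mul_div_div_gcd (M.stepDen_pos C.1 e₁ e₂) K⟩

lemma next_state_lt {C C' : Config} (h : M.next C = some C') : C'.1 < M.m := by
  obtain ⟨s', d₁, d₂, hstep, rfl⟩ := next_eq_some_iff.1 h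
  exact (lt_of_step_eq_some hstep).1

lemma next_time {C C' : Config} (h : M.next C = some C') : C'.2.2.2 = C.2.2.2 + 1 := by
  obtain ⟨s', d₁, d₂, -, rfl⟩ := next_eq_some_iff.1 h
  rfl

lemma gIter_succ (n : ℕ) : M.gIter (n + 1) = M.g (M.gIter n) :=
  Function.iterate_succ_apply' _ _ _

lemma run_eq_some {n : ℕ} {C : Config} (h : M.run n = some C) :
    C.1 < M.m ∧ C.2.2.2 = n ∧ M.gIter n = M.enc C := by
  induction n generalizing C with
  | zero =>
    obtain rfl : (0, 0, 0, 0) = C := by simpa [TCM.run] using h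
    exact ⟨M.hm, rfl, by simp [TCM.gIter, TCM.enc, prm]⟩
  | succ n ih =>
    obtain ⟨C₀, hC₀, hnext⟩ := Option.bind_eq_some_iff.1 h
    obtain ⟨hstate, htime, henc⟩ := ih hC₀
    exact ⟨next_state_lt hnext, by rw [next_time hnext, htime],
      by rw [gIter_succ, henc, (g_enc_of_next_eq_some hstate hnext).2]⟩

lemma Gset_finite_of_halts (h : M.Halts) : M.Gset.Finite := by
  obtain ⟨n, C, hrun, hnext⟩ := h
  obtain ⟨hstate, -, henc⟩ := run_eq_some hrun
  have hfix : Function.IsFixedPt M.g (M.gIter n) := by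
    rw [henc]
    exact g_enc_of_next_eq_none hstate hnext
  refine ((Set.finite_Iic n).image M.gIter).subset ?_
  rintro _ ⟨k, rfl⟩
  rcases le_total k n with hk | hk
  · exact ⟨k, hk, rfl⟩
  · obtain ⟨j, rfl⟩ := Nat.exists_eq_add_of_le' hk
    refine ⟨n, Set.self_mem_Iic, ?_⟩
    rw [TCM.gIter, TCM.gIter, Function.iterate_add_apply]
    exact (hfix.iterate j).symm

lemma exists_run_eq_some_of_not_halts (h : ¬ M.Halts) (n : ℕ) : ∃ C, M.run n = some C := by
  induction n with
  | zero => exact ⟨_, rfl⟩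
  | succ n ih =>
    obtain ⟨C, hC⟩ := ih
    obtain ⟨C', hC'⟩ := Option.ne_none_iff_exists'.1 fun hnone => h ⟨n, C, hC, hnone⟩
    exact ⟨C', Option.bind_eq_some_iff.2 ⟨C, hC, hC'⟩⟩

lemma le_gIter_of_not_halts (h : ¬ M.Halts) (n : ℕ) : n ≤ M.gIter n := by
  obtain ⟨C, hC⟩ := exists_run_eq_some_of_not_halts h n
  obtain ⟨-, htime, henc⟩ := run_eq_some hC
  have hpos : 0 < M.enc C :=
    Nat.pos_of_ne_zero (by simp [TCM.enc, fun i => (prm_pos i).ne'])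
  rw [henc]
  calc n = C.2.2.2 := htime.symm
    _ ≤ prm (M.m + 2) ^ C.2.2.2 := (Nat.lt_pow_self (prm_prime _).one_lt).le
    _ ≤ M.enc C := Nat.le_of_dvd hpos (dvd_mul_left _ _)

lemma ri_dvd_gIter_of_not_halts (h : ¬ M.Halts) (n : ℕ) :
    M.ri (M.gIter n % M.p) ∣ M.gIter n := by
  obtain ⟨C, hC⟩ := exists_run_eq_some_of_not_halts h n
  obtain ⟨C', hC'⟩ := exists_run_eq_some_of_not_halts h (n + 1)
  obtain ⟨hstate, -, henc⟩ := run_eq_some hC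
  have hnext : M.next C = some C' := by simpa [TCM.run, hC] using hC'
  rw [henc]
  exact (g_enc_of_next_eq_some hstate hnext).1

lemma gIter_succ_of_gIter_eq_mul {n c : ℕ} (h : M.gIter n = M.ri (M.gIter n % M.p) * c) :
    M.gIter (n + 1) = M.qi (M.gIter n % M.p) * c := by
  rw [gIter_succ, TCM.g]
  refine Nat.div_eq_of_eq_mul_left (M.ri_pos _) ?_
  calc M.qi (M.gIter n % M.p) * M.gIter n
      = M.qi (M.gIter n % M.p) * (M.ri (M.gIter n % M.p) * c) := by rw [← h]
    _ = M.qi (M.gIter n % M.p) * c * M.ri (M.gIter n % M.p) := by ring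

end TCM

/-! ### The rules of `R_M` on terms -/

section Substitutions

variable {J : Set Atom} {σ τ : Subst}

lemma mem_varsF {A : Finset Atom} {v : Var} : v ∈ varsF A ↔ ∃ a ∈ A, Sum.inr v ∈ a.2 := by
  simp only [varsF, atomVarsF, Finset.mem_biUnion, List.mem_toFinset, List.mem_filterMap,
    Sum.getRight?_eq_some_iff, exists_eq_right]

lemma applyA_congr {a : Atom} (h : ∀ v, Sum.inr v ∈ a.2 → σ v = τ v) :
    applyA σ a = applyA τ a := by
  refine Prod.ext rfl (List.map_congr_left ?_)
  rintro (c | v) ht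
  exacts [rfl, h v ht]

lemma isHomOn_coe_singleton {a : Atom} :
    IsHomOn σ (({a} : Finset Atom) : Set Atom) J ↔ applyA σ a ∈ J := by
  simp [IsHomOn]

lemma isHomOn_coe_insert {a : Atom} {A : Finset Atom} :
    IsHomOn σ ((insert a A : Finset Atom) : Set Atom) J ↔ applyA σ a ∈ J ∧ IsHomOn σ A J := by
  simp [IsHomOn]

lemma isHomOn_coe_union {A B : Finset Atom} :
    IsHomOn σ ((A ∪ B : Finset Atom) : Set Atom) J ↔ IsHomOn σ A J ∧ IsHomOn σ B J := by
  simp only [IsHomOn, Finset.coe_union, Set.mem_union, or_imp, forall_and]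

lemma isHomOn_coe_biUnion {κ : Type*} {s : Finset κ} {A : κ → Finset Atom} :
    IsHomOn σ (s.biUnion A : Set Atom) J ↔ ∀ i ∈ s, IsHomOn σ (A i) J := by
  simp only [IsHomOn, Finset.coe_biUnion, Set.mem_iUnion₂, forall_exists_index]
  exact ⟨fun h i hi a ha => h a i hi ha, fun h a i hi ha => h i hi a ha⟩

lemma satisfiesRule_iff_of_forall_mem_head {R : Rule}
    (hR : ∀ a ∈ R.2, ∀ t ∈ a.2, ∃ b ∈ R.1, t ∈ b.2) :
    SatisfiesRule J R ↔
      ∀ σ, IsHomOn σ (R.1 : Set Atom) J → IsHomOn σ (R.2 : Set Atom) J := by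
  refine ⟨fun h σ hσ a ha => ?_, fun h σ hσ => ⟨σ, fun _ _ => rfl, h σ hσ⟩⟩
  obtain ⟨σ', heq, hσ'⟩ := h σ hσ
  rw [← applyA_congr fun v hv => heq v (mem_varsF.2 (hR a ha _ hv))]
  exact hσ' a ha

/-- The substitution `n ↦ x n` on the ordinary variables; its values on the fresh variables,
which occur in no rule, are irrelevant. -/
def ordinarySubst (x : ℕ → FTerm) : Subst := Sum.elim x fun _ => wC

end Substitutions

section SPaths

variable {J J' : Set Atom} {n : ℕ} {s t : FTerm}

lemma SPath.mono (h : J ⊆ J') (hp : SPath J n s t) : SPath J' n s t := by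
  induction n generalizing s with
  | zero => exact hp
  | succ n ih =>
    obtain ⟨u, hu, hut⟩ := hp
    exact ⟨u, h hu, ih hut⟩

lemma sPath_iff_exists_vertices : SPath J n s t ↔
    ∃ u : ℕ → FTerm, u 0 = s ∧ u n = t ∧ ∀ j < n, (pS, [u j, u (j + 1)]) ∈ J := by
  induction n generalizing s with
  | zero => exact ⟨fun h => ⟨fun _ => s, rfl, h, by simp⟩, fun ⟨u, hs, ht, _⟩ => hs.symm.trans ht⟩
  | succ n ih =>
    constructor
    · rintro ⟨s', hss', hp⟩
      obtain ⟨u, rfl, hut, hu⟩ := ih.1 hp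
      refine ⟨fun | 0 => s | j + 1 => u j, rfl, hut, ?_⟩
      rintro (_ | j) hj
      exacts [hss', hu j (by omega)]
    · rintro ⟨u, rfl, hut, hu⟩
      exact ⟨u 1, hu 0 (by omega),
        ih.2 ⟨fun j => u (j + 1), rfl, hut, fun j hj => hu (j + 1) (by omega)⟩⟩

variable {σ : Subst} {a b base : ℕ}

lemma isHomOn_spath_iff : IsHomOn σ (spath a b base n : Set Atom) J ↔
    ∀ j < n,
      (pS, [applyT σ (pathVar a b base n j), applyT σ (pathVar a b base n (j + 1))]) ∈ J := by
  simp [IsHomOn, spath, applyA]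

lemma sPath_of_isHomOn_spath (hn : 0 < n) (h : IsHomOn σ (spath a b base n : Set Atom) J) :
    SPath J n (σ (Sum.inl a)) (σ (Sum.inl b)) :=
  sPath_iff_exists_vertices.2 ⟨fun j => applyT σ (pathVar a b base n j),
    by simp [pathVar, vt, applyT], by simp [pathVar, vt, applyT, hn.ne'], isHomOn_spath_iff.1 h⟩

lemma isHomOn_spath_of_vertices {u : ℕ → FTerm} (ha : σ (Sum.inl a) = u 0)
    (hb : σ (Sum.inl b) = u n) (hbase : ∀ j, 0 < j → j < n → σ (Sum.inl (base + j)) = u j)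
    (hu : ∀ j < n, (pS, [u j, u (j + 1)]) ∈ J) :
    IsHomOn σ (spath a b base n : Set Atom) J := by
  have hvertex : ∀ j ≤ n, applyT σ (pathVar a b base n j) = u j := by
    intro j hj
    unfold pathVar
    split_ifs with h0 hn
    exacts [h0 ▸ ha, hn ▸ hb, hbase j (by omega) (by omega)]
  refine isHomOn_spath_iff.2 fun j hj => ?_
  rw [hvertex j hj.le, hvertex (j + 1) hj]
  exact hu j hj

lemma exists_mem_spath_vt_mem (hn : 0 < n) : ∃ e ∈ spath a b base n, vt b ∈ e.2 := by
  refine ⟨_, Finset.mem_image_of_mem _ (Finset.mem_range.2 (Nat.sub_one_lt hn.ne')), ?_⟩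
  simp [pathVar, Nat.sub_add_cancel hn, hn.ne']

end SPaths

section Rules

variable {J : Set Atom} {M : TCM} {i : ℕ}

/-- The atoms that rule (9) demands of its existential witness `x`. -/
structure IsSuccessor (M : TCM) (J : Set Atom) (y x : FTerm) : Prop where
  s0 : (pS0, [x, y]) ∈ J
  r : (pR 0, [x, x]) ∈ J
  t : ∀ i < M.p, (pT i, [x, x, x]) ∈ J

/-- Satisfaction of the Datalog rules (1)–(8) of `R_M`, spelled out on terms. -/
structure DatalogClosed (M : TCM) (J : Set Atom) : Prop where
  s_of_s0 : ∀ x y, (pS0, [x, y]) ∈ J → (pS, [x, y]) ∈ J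
  r_succ : ∀ i < M.p, ∀ x y z, (pR i, [x, y]) ∈ J → (pS, [y, z]) ∈ J →
    (pR ((i + 1) % M.p), [x, z]) ∈ J
  t_shift : ∀ i < M.p, ∀ x y z y' z', (pT i, [x, y, z]) ∈ J → SPath J (M.ri i) y y' →
    SPath J (M.qi i) z z' → (pT i, [x, y', z']) ∈ J
  flood_of_s : ∀ x y, (pS, [x, y]) ∈ J → (pFlood, [y]) ∈ J
  s_of_end : ∀ x, (pEnd, [x]) ∈ J → (pS, [x, x]) ∈ J
  g_of_sPath : ∀ x y, SPath J 2 x y → (pG, [x, y]) ∈ J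
  g_step : ∀ i < M.p, ∀ x y z, (pG, [x, y]) ∈ J → (pR i, [x, y]) ∈ J → (pT i, [x, y, z]) ∈ J →
    (pG, [x, z]) ∈ J
  of_flood : ∀ x y z, (pFlood, [x]) ∈ J → (pFlood, [y]) ∈ J → (pFlood, [z]) ∈ J →
    (pG, [x, y]) ∈ J ∧ ∀ i < M.p, (pR i, [x, y]) ∈ J ∧ (pT i, [x, y, z]) ∈ J

lemma satisfiesRule_ruleS :
    SatisfiesRule J ruleS ↔ ∀ x y, (pS0, [x, y]) ∈ J → (pS, [x, y]) ∈ J := by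
  rw [satisfiesRule_iff_of_forall_mem_head (by simp [ruleS])]
  simp only [ruleS, isHomOn_coe_singleton]
  exact ⟨fun h x y => h (ordinarySubst fun | 0 => x | _ => y), fun h σ => h _ _⟩

lemma satisfiesRule_ruleFloodProp :
    SatisfiesRule J ruleFloodProp ↔ ∀ x y, (pS, [x, y]) ∈ J → (pFlood, [y]) ∈ J := by
  rw [satisfiesRule_iff_of_forall_mem_head (by simp [ruleFloodProp, -Sum.forall])]
  simp only [ruleFloodProp, isHomOn_coe_singleton]
  exact ⟨fun h x y => h (ordinarySubst fun | 0 => x | _ => y), fun h σ => h _ _⟩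

lemma satisfiesRule_ruleSEnd :
    SatisfiesRule J ruleSEnd ↔ ∀ x, (pEnd, [x]) ∈ J → (pS, [x, x]) ∈ J := by
  rw [satisfiesRule_iff_of_forall_mem_head (by simp [ruleSEnd])]
  simp only [ruleSEnd, isHomOn_coe_singleton]
  exact ⟨fun h x => h (ordinarySubst fun _ => x), fun h σ => h _⟩

lemma satisfiesRule_ruleR : SatisfiesRule J (ruleR M i) ↔
    ∀ x y z, (pR i, [x, y]) ∈ J → (pS, [y, z]) ∈ J → (pR ((i + 1) % M.p), [x, z]) ∈ J := by
  rw [satisfiesRule_iff_of_forall_mem_head (by simp [ruleR, or_imp, forall_and, -Sum.forall])]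
  simp only [ruleR, isHomOn_coe_singleton, isHomOn_coe_insert, and_imp]
  exact ⟨fun h x y z => h (ordinarySubst fun | 0 => x | 1 => y | _ => z), fun h σ => h _ _ _⟩

lemma satisfiesRule_ruleGStep : SatisfiesRule J (ruleGStep i) ↔
    ∀ x y z, (pG, [x, y]) ∈ J → (pR i, [x, y]) ∈ J → (pT i, [x, y, z]) ∈ J →
      (pG, [x, z]) ∈ J := by
  rw [satisfiesRule_iff_of_forall_mem_head (by simp [ruleGStep, or_imp, forall_and, -Sum.forall])]
  simp only [ruleGStep, isHomOn_coe_singleton, isHomOn_coe_insert, and_imp]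
  exact ⟨fun h x y z => h (ordinarySubst fun | 0 => x | 1 => y | _ => z), fun h σ => h _ _ _⟩

lemma satisfiesRule_ruleFloodGen : SatisfiesRule J (ruleFloodGen M) ↔
    ∀ x y z, (pFlood, [x]) ∈ J → (pFlood, [y]) ∈ J → (pFlood, [z]) ∈ J →
      (pG, [x, y]) ∈ J ∧ ∀ i < M.p, (pR i, [x, y]) ∈ J ∧ (pT i, [x, y, z]) ∈ J := by
  rw [satisfiesRule_iff_of_forall_mem_head]
  · simp only [ruleFloodGen, isHomOn_coe_singleton, isHomOn_coe_insert, isHomOn_coe_union,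
      isHomOn_coe_biUnion, Finset.mem_range, and_imp]
    exact ⟨fun h x y z => h (ordinarySubst fun | 0 => x | 1 => y | _ => z), fun h σ => h _ _ _⟩
  · simp only [ruleFloodGen, Finset.mem_union, Finset.mem_biUnion, Finset.mem_insert,
      Finset.mem_singleton]
    rintro a (rfl | ⟨j, -, rfl | rfl⟩) <;> simp

lemma satisfiesRule_ruleGInit : SatisfiesRule J ruleGInit ↔
    ∀ x y, SPath J 2 x y → (pG, [x, y]) ∈ J := by
  rw [satisfiesRule_iff_of_forall_mem_head
    (by simp [ruleGInit, spath, Finset.range_add_one, pathVar, or_imp, forall_and, -Sum.forall])]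
  simp only [ruleGInit, isHomOn_coe_singleton]
  refine ⟨fun h x y hxy => ?_, fun h σ hσ => h _ _ (sPath_of_isHomOn_spath two_pos hσ)⟩
  obtain ⟨u, rfl, rfl, hu⟩ := sPath_iff_exists_vertices.1 hxy
  refine h (ordinarySubst fun | 0 => u 0 | 1 => u 2 | _ => u 1)
    (isHomOn_spath_of_vertices rfl rfl (fun j h0 h2 => ?_) hu)
  obtain rfl : j = 1 := by omega
  rfl

lemma satisfiesRule_ruleT : SatisfiesRule J (ruleT M i) ↔
    ∀ x y z y' z', (pT i, [x, y, z]) ∈ J → SPath J (M.ri i) y y' → SPath J (M.qi i) z z' →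
      (pT i, [x, y', z']) ∈ J := by
  rw [satisfiesRule_iff_of_forall_mem_head]
  · simp only [ruleT, isHomOn_coe_singleton, isHomOn_coe_union, and_imp]
    refine ⟨fun h x y z y' z' hT hy hz => ?_, fun h σ hT hy hz => h _ _ _ _ _ hT
      (sPath_of_isHomOn_spath (M.ri_pos i) hy) (sPath_of_isHomOn_spath (M.qi_pos i) hz)⟩
    obtain ⟨u, rfl, rfl, hu⟩ := sPath_iff_exists_vertices.1 hy
    obtain ⟨v, rfl, rfl, hv⟩ := sPath_iff_exists_vertices.1 hz
    refine h (ordinarySubst fun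
        | 0 => x | 1 => u 0 | 2 => v 0 | 3 => u (M.ri i) | 4 => v (M.qi i)
        | n + 5 => if n + 5 < 11 + M.ri i then u (n + 5 - 10) else v (n + 5 - (11 + M.ri i))) hT
      (isHomOn_spath_of_vertices rfl rfl (fun j _ hj => ?_) hu)
      (isHomOn_spath_of_vertices rfl rfl (fun j _ _ => ?_) hv)
    · rw [show 10 + j = j + 5 + 5 by omega]
      exact (if_pos (by omega)).trans (congrArg u (by omega))
    · rw [show 11 + M.ri i + j = M.ri i + j + 6 + 5 by omega]
      exact (if_neg (by omega)).trans (congrArg v (by omega))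
  · simp only [ruleT, Finset.mem_union, Finset.mem_singleton, forall_eq, List.mem_cons,
      List.not_mem_nil, or_false]
    rintro t (rfl | rfl | rfl)
    · exact ⟨_, .inl (.inl rfl), by simp⟩
    · obtain ⟨e, he, hmem⟩ := exists_mem_spath_vt_mem (a := 1) (b := 3) (base := 10) (M.ri_pos i)
      exact ⟨e, .inl (.inr he), hmem⟩
    · obtain ⟨e, he, hmem⟩ :=
        exists_mem_spath_vt_mem (a := 2) (b := 4) (base := 11 + M.ri i) (M.qi_pos i)
      exact ⟨e, .inr he, hmem⟩

lemma satisfiesRule_ruleEx : SatisfiesRule J (ruleEx M) ↔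
    ∀ y z, (pG, [y, z]) ∈ J → (pEnd, [z]) ∈ J → ∃ x, IsSuccessor M J y x := by
  have head_iff : ∀ σ, IsHomOn σ ((ruleEx M).2 : Set Atom) J ↔
      IsSuccessor M J (σ (Sum.inl 1)) (σ (Sum.inl 0)) := fun σ => by
    simp only [ruleEx, isHomOn_coe_union, isHomOn_coe_insert, isHomOn_coe_singleton,
      isHomOn_coe_biUnion, Finset.mem_range]
    exact ⟨fun ⟨⟨hs, hr⟩, ht⟩ => ⟨hs, hr, ht⟩, fun h => ⟨⟨h.s0, h.r⟩, h.t⟩⟩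
  have mem_body_iff : ∀ v, v ∈ varsF (ruleEx M).1 ↔ v = Sum.inl 1 ∨ v = Sum.inl 2 := fun v => by
    simp only [mem_varsF, ruleEx, vt]
    simp
  simp only [SatisfiesRule, head_iff, mem_body_iff]
  simp only [ruleEx, isHomOn_coe_insert, isHomOn_coe_singleton, and_imp]
  constructor
  · intro h y z hG hEnd
    obtain ⟨σ', heq, hσ'⟩ := h (ordinarySubst fun | 1 => y | _ => z) hG hEnd
    rw [heq _ (.inl rfl)] at hσ'
    exact ⟨_, hσ'⟩
  · intro h σ hG hEnd
    obtain ⟨x, hx⟩ := h _ _ hG hEnd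
    refine ⟨Function.update σ (Sum.inl 0) x, ?_, ?_⟩
    · rintro v (rfl | rfl) <;> rfl
    · rw [Function.update_self]
      exact hx

lemma forall_mem_RM_satisfiesRule_iff : (∀ R ∈ RM M, SatisfiesRule J R) ↔
    DatalogClosed M J ∧
      ∀ y z, (pG, [y, z]) ∈ J → (pEnd, [z]) ∈ J → ∃ x, IsSuccessor M J y x := by
  have forall_mem_indexed_iff : (∀ R ∈ (Finset.range M.p).biUnion fun i =>
        {ruleR M i, ruleT M i, ruleGStep i}, SatisfiesRule J R) ↔
      ∀ i < M.p, SatisfiesRule J (ruleR M i) ∧ SatisfiesRule J (ruleT M i) ∧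
        SatisfiesRule J (ruleGStep i) := by
    simp only [Finset.mem_biUnion, Finset.mem_range, forall_exists_index, and_imp]
    simp only [forall_comm (α := Rule), Finset.forall_mem_insert, Finset.mem_singleton, forall_eq]
  rw [RM, Finset.forall_mem_union, forall_mem_indexed_iff]
  simp only [Finset.forall_mem_insert, Finset.mem_singleton, forall_eq, satisfiesRule_ruleS,
    satisfiesRule_ruleFloodProp, satisfiesRule_ruleSEnd, satisfiesRule_ruleGInit,
    satisfiesRule_ruleFloodGen, satisfiesRule_ruleEx, satisfiesRule_ruleR, satisfiesRule_ruleT,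
    satisfiesRule_ruleGStep]
  exact ⟨fun ⟨⟨hS, hFlood, hEnd, hG, hGen, hEx⟩, hi⟩ => ⟨⟨hS, fun i hip => (hi i hip).1,
      fun i hip => (hi i hip).2.1, hFlood, hEnd, hG, fun i hip => (hi i hip).2.2, hGen⟩, hEx⟩,
    fun ⟨h, hEx⟩ => ⟨⟨h.s_of_s0, h.flood_of_s, h.s_of_end, h.g_of_sPath, h.of_flood, hEx⟩,
      fun i hip => ⟨h.r_succ i hip, h.t_shift i hip, h.g_step i hip⟩⟩⟩

end Rules

/-! ### The Skolem chase -/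

section DatalogClosed

variable {M : TCM} {J K : Set Atom} {n d : ℕ} {s t : FTerm}

lemma SPath.add_right {P : ℕ → FTerm → Prop}
    (hP : ∀ d u v, (pS, [u, v]) ∈ J → P d u → P (d + 1) v) (hp : SPath J n s t) (hs : P d s) :
    P (d + n) t := by
  induction n generalizing s d with
  | zero => exact hp ▸ hs
  | succ n ih =>
    obtain ⟨u, hsu, hut⟩ := hp
    rw [← add_assoc, add_right_comm]
    exact ih hut (hP d s u hsu hs)

lemma SPath.map {τ : Subst} (hp : SPath {a | applyA τ a ∈ J} n s t) :
    SPath J n (applyT τ s) (applyT τ t) := by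
  induction n generalizing s with
  | zero => exact congrArg (applyT τ) hp
  | succ n ih =>
    obtain ⟨u, hsu, hut⟩ := hp
    exact ⟨applyT τ u, hsu, ih hut⟩

lemma DatalogClosed.sInter {F : Set (Set Atom)} (h : ∀ J ∈ F, DatalogClosed M J) :
    DatalogClosed M (⋂₀ F) where
  s_of_s0 _ _ hxy J hJ := (h J hJ).s_of_s0 _ _ (hxy J hJ)
  r_succ i hi _ _ _ hR hS J hJ := (h J hJ).r_succ i hi _ _ _ (hR J hJ) (hS J hJ)
  t_shift i hi _ _ _ _ _ hT hy hz J hJ :=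
    have hF := Set.sInter_subset_of_mem hJ
    (h J hJ).t_shift i hi _ _ _ _ _ (hT J hJ) (hy.mono hF) (hz.mono hF)
  flood_of_s _ _ hS J hJ := (h J hJ).flood_of_s _ _ (hS J hJ)
  s_of_end _ hE J hJ := (h J hJ).s_of_end _ (hE J hJ)
  g_of_sPath _ _ hp J hJ := (h J hJ).g_of_sPath _ _ (hp.mono (Set.sInter_subset_of_mem hJ))
  g_step i hi _ _ _ hG hR hT J hJ :=
    (h J hJ).g_step i hi _ _ _ (hG J hJ) (hR J hJ) (hT J hJ)
  of_flood _ _ _ hx hy hz :=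
    have hJ J hJ := (h J hJ).of_flood _ _ _ (hx J hJ) (hy J hJ) (hz J hJ)
    ⟨fun J hJF => (hJ J hJF).1, fun i hi =>
      ⟨fun J hJF => ((hJ J hJF).2 i hi).1, fun J hJF => ((hJ J hJF).2 i hi).2⟩⟩

lemma DatalogClosed.inter (hJ : DatalogClosed M J) (hK : DatalogClosed M K) :
    DatalogClosed M (J ∩ K) := by
  rw [← Set.sInter_pair]
  exact .sInter (by simp [hJ, hK])

lemma DatalogClosed.preimage_applyA (h : DatalogClosed M J) (τ : Subst) :
    DatalogClosed M {a | applyA τ a ∈ J} where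
  s_of_s0 _ _ := h.s_of_s0 _ _
  r_succ i hi _ _ _ := h.r_succ i hi _ _ _
  t_shift i hi _ _ _ _ _ hT hy hz := h.t_shift i hi _ _ _ _ _ hT hy.map hz.map
  flood_of_s _ _ := h.flood_of_s _ _
  s_of_end _ := h.s_of_end _
  g_of_sPath _ _ hp := h.g_of_sPath _ _ hp.map
  g_step i hi _ _ _ := h.g_step i hi _ _ _
  of_flood _ _ _ := h.of_flood _ _ _

lemma datalogClosed_setOf_forall_mem (D : Set FTerm) :
    DatalogClosed M {a | ∀ t ∈ a.2, t ∈ D} := by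
  have mem_of_sPath {n s t} (hp : SPath {a : Atom | ∀ t ∈ a.2, t ∈ D} n s t) (hs : s ∈ D) :
      t ∈ D := by
    refine hp.add_right (P := fun _ u => u ∈ D) (d := 0) (fun _ u v huv _ => ?_) hs
    exact huv v (by simp)
  constructor <;> simp only [Set.mem_ofPred_eq, List.forall_mem_cons, List.not_mem_nil,
    IsEmpty.forall_iff, implies_true, and_true]
  case t_shift => exact fun _ _ _ _ _ _ _ h hy hz =>
    ⟨h.1, mem_of_sPath hy h.2.1, mem_of_sPath hz h.2.2⟩
  case g_of_sPath =>
    rintro x y ⟨u, hu, hp⟩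
    exact ⟨hu x (by simp), mem_of_sPath hp (hu u (by simp))⟩
  all_goals tauto

end DatalogClosed

section SkolemChase

variable {M : TCM} {f : FTerm → FTerm} {I J : Set Atom}

/-- Closure under the rules of `R_M` with the Skolem function `f` naming the witnesses of
rule (9). -/
structure SkolemClosed (M : TCM) (f : FTerm → FTerm) (J : Set Atom) : Prop
    extends DatalogClosed M J where
  isSuccessor : ∀ y z, (pG, [y, z]) ∈ J → (pEnd, [z]) ∈ J → IsSuccessor M J y (f y)

/-- The Skolem chase of `I`: the least set of atoms that contains `I` and is closed under the
skolemised rules of `R_M`. -/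
def skolemChase (M : TCM) (f : FTerm → FTerm) (I : Set Atom) : Set Atom :=
  ⋂₀ {J | I ⊆ J ∧ SkolemClosed M f J}

lemma subset_skolemChase : I ⊆ skolemChase M f I := Set.subset_sInter fun _ hJ => hJ.1

lemma skolemChase_subset (hI : I ⊆ J) (hJ : SkolemClosed M f J) : skolemChase M f I ⊆ J :=
  Set.sInter_subset_of_mem ⟨hI, hJ⟩

lemma skolemClosed_skolemChase : SkolemClosed M f (skolemChase M f I) where
  toDatalogClosed := .sInter fun _ hJ => hJ.2.toDatalogClosed
  isSuccessor y z hG hE :=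
    have h J (hJ : I ⊆ J ∧ SkolemClosed M f J) := hJ.2.isSuccessor y z (hG J hJ) (hE J hJ)
    ⟨fun J hJ => (h J hJ).s0, fun J hJ => (h J hJ).r, fun i hi J hJ => (h J hJ).t i hi⟩

lemma skolemChase_subset_of_datalogClosed (hI : I ⊆ J) (hJ : DatalogClosed M J)
    (hsucc : ∀ y z, (pG, [y, z]) ∈ skolemChase M f I ∩ J →
      (pEnd, [z]) ∈ skolemChase M f I ∩ J → IsSuccessor M J y (f y)) :
    skolemChase M f I ⊆ J := by
  have hchase := skolemClosed_skolemChase (M := M) (f := f) (I := I)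
  refine (skolemChase_subset (J := skolemChase M f I ∩ J)
    (Set.subset_inter subset_skolemChase hI)
    ⟨hchase.toDatalogClosed.inter hJ, fun y z hG hE => ?_⟩).trans Set.inter_subset_right
  have hy := hchase.isSuccessor y z hG.1 hE.1
  have hy' := hsucc y z hG hE
  exact ⟨⟨hy.s0, hy'.s0⟩, ⟨hy.r, hy'.r⟩, fun i hi => ⟨hy.t i hi, hy'.t i hi⟩⟩

lemma adom_skolemChase_subset {D : Set FTerm} (hI : adom I ⊆ D)
    (hD : ∀ y ∈ D, ∀ z, (pG, [y, z]) ∈ skolemChase M f I → (pEnd, [z]) ∈ skolemChase M f I →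
      f y ∈ D) :
    adom (skolemChase M f I) ⊆ D := by
  have hchase : skolemChase M f I ⊆ {a | ∀ t ∈ a.2, t ∈ D} := by
    refine skolemChase_subset_of_datalogClosed (fun a ha t ht => hI ⟨a, ha, ht⟩)
      (datalogClosed_setOf_forall_mem D) fun y z hG hE => ?_
    have hy : y ∈ D := hG.2 y (by simp)
    have hfy : f y ∈ D := hD y hy z hG.1 hE.1
    constructor <;> simp [hy, hfy, or_imp, forall_and, -Sum.forall]
  rintro t ⟨a, ha, ht⟩
  exact hchase ha t ht

end SkolemChase

section Interpretation

/-- An interpretation of the predicates of `R_M` by relations on terms. -/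
structure Interpretation where
  endP : FTerm → Prop
  flood : FTerm → Prop
  s0 : FTerm → FTerm → Prop
  s : FTerm → FTerm → Prop
  g : FTerm → FTerm → Prop
  r : ℕ → FTerm → FTerm → Prop
  t : ℕ → FTerm → FTerm → FTerm → Prop

namespace Interpretation

/-- The atoms that hold in an interpretation. Atoms outside the signature of `R_M`, which no
rule can see, are included, so that an instance containing them can be a subset. -/
def atoms (𝓘 : Interpretation) : Set Atom :=
  {a | (∀ x, a = (pEnd, [x]) → 𝓘.endP x) ∧ (∀ x, a = (pFlood, [x]) → 𝓘.flood x) ∧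
    (∀ x y, a = (pS0, [x, y]) → 𝓘.s0 x y) ∧ (∀ x y, a = (pS, [x, y]) → 𝓘.s x y) ∧
    (∀ x y, a = (pG, [x, y]) → 𝓘.g x y) ∧ (∀ i x y, a = (pR i, [x, y]) → 𝓘.r i x y) ∧
    ∀ i x y z, a = (pT i, [x, y, z]) → 𝓘.t i x y z}

variable {𝓘 : Interpretation} {i : ℕ} {x y z : FTerm}

@[simp] lemma endP_mem_atoms : (pEnd, [x]) ∈ 𝓘.atoms ↔ 𝓘.endP x := by
  simp [atoms, pEnd, pFlood, -Sum.forall]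

@[simp] lemma flood_mem_atoms : (pFlood, [x]) ∈ 𝓘.atoms ↔ 𝓘.flood x := by
  simp [atoms, pEnd, pFlood, -Sum.forall]

@[simp] lemma s0_mem_atoms : (pS0, [x, y]) ∈ 𝓘.atoms ↔ 𝓘.s0 x y := by
  simp [atoms, pS0, pS, pG, pR, show ∀ i : ℕ, 2 ≠ 5 + 2 * i by omega, -Sum.forall]

@[simp] lemma s_mem_atoms : (pS, [x, y]) ∈ 𝓘.atoms ↔ 𝓘.s x y := by
  simp [atoms, pS0, pS, pG, pR, show ∀ i : ℕ, 3 ≠ 5 + 2 * i by omega, -Sum.forall]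

@[simp] lemma g_mem_atoms : (pG, [x, y]) ∈ 𝓘.atoms ↔ 𝓘.g x y := by
  simp [atoms, pS0, pS, pG, pR, show ∀ i : ℕ, 4 ≠ 5 + 2 * i by omega, -Sum.forall]

@[simp] lemma r_mem_atoms : (pR i, [x, y]) ∈ 𝓘.atoms ↔ 𝓘.r i x y := by
  simp [atoms, pS0, pS, pG, pR, show 5 + 2 * i ≠ 2 by omega, show 5 + 2 * i ≠ 3 by omega,
    show 5 + 2 * i ≠ 4 by omega, -Sum.forall]

@[simp] lemma t_mem_atoms : (pT i, [x, y, z]) ∈ 𝓘.atoms ↔ 𝓘.t i x y z := by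
  simp only [atoms, pEnd, pFlood, pS0, pS, pG, pR, pT, Set.mem_ofPred_eq, Prod.mk.injEq,
    List.cons.injEq, reduceCtorEq, and_false, false_imp_iff, implies_true, and_true, true_and,
    Nat.add_left_cancel_iff, mul_right_inj' two_ne_zero]
  refine ⟨fun h => h i x y z ⟨rfl, rfl, rfl, rfl⟩, ?_⟩
  rintro h _ _ _ _ ⟨rfl, rfl, rfl, rfl⟩
  exact h

end Interpretation

end Interpretation

section FreeIterates

/-- `f` behaves like a free unary function symbol over the generators `A`: it is injective and
none of its values lies in `A`. -/
structure IsFreeOver {α : Type*} (f : α → α) (A : Set α) : Prop where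
  injective : Function.Injective f
  apply_notMem : ∀ x, f x ∉ A

/-- The terms of nesting depth `n` over the generators `A`. -/
def level {α : Type*} (f : α → α) (A : Set α) (n : ℕ) : Set α := f^[n] '' A

variable {α : Type*} {f : α → α} {A : Set α} {m n : ℕ} {x y : α}

lemma apply_mem_level_succ (hx : x ∈ level f A n) : f x ∈ level f A (n + 1) := by
  obtain ⟨a, ha, rfl⟩ := hx
  exact ⟨a, ha, Function.iterate_succ_apply' f n a⟩

lemma mem_level_zero : x ∈ level f A 0 ↔ x ∈ A := by
  simp [level]

namespace IsFreeOver

lemma iterate_inj (hf : IsFreeOver f A) (hx : x ∈ A) (hy : y ∈ A) (h : f^[m] x = f^[n] y) :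
    m = n ∧ x = y := by
  wlog hmn : m ≤ n generalizing m n x y
  · exact (this hy hx h.symm (le_of_not_ge hmn)).imp Eq.symm Eq.symm
  obtain ⟨k, rfl⟩ := Nat.exists_eq_add_of_le hmn
  rw [Function.iterate_add_apply] at h
  obtain rfl := hf.injective.iterate m h
  cases k with
  | zero => exact ⟨rfl, rfl⟩
  | succ k =>
    rw [Function.iterate_succ_apply'] at hx
    exact absurd hx (hf.apply_notMem _)

lemma eq_of_mem_level (hf : IsFreeOver f A) (hm : x ∈ level f A m) (hn : x ∈ level f A n) :
    m = n := by
  obtain ⟨a, ha, rfl⟩ := hm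
  obtain ⟨b, hb, h⟩ := hn
  exact (hf.iterate_inj hb ha h).1.symm

lemma notMem_level (hf : IsFreeOver f A) (hx : x ∈ A) (hn : 0 < n) : x ∉ level f A n := fun hxn =>
  hn.ne' (hf.eq_of_mem_level hxn (mem_level_zero.2 hx))

lemma mem_level_sub_one (hf : IsFreeOver f A) (hx : x ∈ level f A n)
    (hxy : x ∈ A ∧ y ∈ A ∨ x = f y) : y ∈ level f A (n - 1) := by
  rcases hxy with ⟨hxA, hyA⟩ | rfl
  · obtain rfl : n = 0 := hf.eq_of_mem_level hx (mem_level_zero.2 hxA)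
    exact mem_level_zero.2 hyA
  · obtain ⟨a, ha, h⟩ := hx
    cases n with
    | zero => exact absurd (h ▸ ha) (hf.apply_notMem y)
    | succ n =>
      rw [Function.iterate_succ_apply'] at h
      exact ⟨a, ha, hf.injective h⟩

end IsFreeOver

lemma exists_isFreeOver {A : Set FTerm} (hA : A.Finite) :
    ∃ f, IsFreeOver f A ∧ ∀ t, ∃ v, f t = Sum.inr v := by
  have hvt : Function.Injective vt := Sum.inr_injective.comp Sum.inl_injective
  obtain ⟨B, hB⟩ := (hA.preimage hvt.injOn).bddAbove
  refine ⟨fun t => vt (B + 1 + Encodable.encode t), ⟨fun s t h => ?_, fun t ht => ?_⟩,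
    fun t => ⟨_, rfl⟩⟩
  · exact Encodable.encode_injective (Nat.add_left_cancel (hvt h))
  · have := hB ht
    omega

lemma IsFreeOver.exists_subst_iterate {f : FTerm → FTerm} {A : Set FTerm} (hf : IsFreeOver f A)
    (hvar : ∀ t, ∃ v, f t = Sum.inr v) (σ : Subst) (p : FTerm → FTerm) :
    ∃ τ : Subst, ∀ x ∈ A, ∀ n, applyT τ (f^[n] x) = p^[n] (applyT σ x) := by
  let term : A × ℕ → FTerm := fun q => f^[q.2] q.1
  have hterm : Function.Injective term := fun q q' h =>
    have h := hf.iterate_inj q.1.2 q'.1.2 h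
    Prod.ext (Subtype.ext h.2) h.1
  let value : FTerm → FTerm :=
    Function.extend term (fun q => p^[q.2] (applyT σ q.1)) fun _ => wC
  have hvalue : ∀ x ∈ A, ∀ n, value (f^[n] x) = p^[n] (applyT σ x) := fun x hx n =>
    hterm.extend_apply _ _ (⟨x, hx⟩, n)
  refine ⟨fun v => value (Sum.inr v), fun x hx n => ?_⟩
  have applyT_eq : ∀ v, Sum.inr v = f^[n] x →
      applyT (fun v => value (Sum.inr v)) (f^[n] x) = p^[n] (applyT σ x) := fun v hv => by
    rw [← hvalue x hx n, ← hv]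
    rfl
  cases n with
  | zero =>
    rcases x with c | v
    exacts [rfl, applyT_eq v rfl]
  | succ n =>
    obtain ⟨v, hv⟩ := hvar (f^[n] x)
    exact applyT_eq v (by rw [Function.iterate_succ_apply', hv])

end FreeIterates

section Universality

variable {M : TCM} {f : FTerm → FTerm} {I J : Set Atom}

lemma applyA_inr (a : Atom) : applyA Sum.inr a = a := by
  have applyT_inr : applyT Sum.inr = id := by
    funext t
    cases t <;> rfl
  simp [applyA, applyT_inr]

lemma SkolemClosed.isModel (hJ : SkolemClosed M f J) (hI : I ⊆ J) : IsModel (RM M) I J :=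
  ⟨forall_mem_RM_satisfiesRule_iff.2
      ⟨hJ.toDatalogClosed, fun y z hG hE => ⟨f y, hJ.isSuccessor y z hG hE⟩⟩,
    Sum.inr, fun a ha => (applyA_inr a).symm ▸ hI ha⟩

lemma isUniversalModel_skolemChase (hf : IsFreeOver f (adom I))
    (hvar : ∀ t, ∃ v, f t = Sum.inr v) : IsUniversalModel (RM M) I (skolemChase M f I) := by
  refine ⟨skolemClosed_skolemChase.isModel subset_skolemChase, fun J hJ => ?_⟩
  obtain ⟨hsat, σ, hσ⟩ := hJ
  obtain ⟨hJ, hex⟩ := forall_mem_RM_satisfiesRule_iff.1 hsat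
  have exists_witness : ∀ y, ∃ x, ∀ z, (pG, [y, z]) ∈ J → (pEnd, [z]) ∈ J →
      IsSuccessor M J y x := fun y => by
    by_cases h : ∃ z, (pG, [y, z]) ∈ J ∧ (pEnd, [z]) ∈ J
    · obtain ⟨z, hG, hE⟩ := h
      exact (hex y z hG hE).imp fun _ hx _ _ _ => hx
    · exact ⟨y, fun z hG hE => absurd ⟨z, hG, hE⟩ h⟩
  choose p hp using exists_witness
  obtain ⟨τ, hτ⟩ := hf.exists_subst_iterate hvar σ p
  have hadom : adom (skolemChase M f I) ⊆ {t | ∃ n, t ∈ level f (adom I) n} :=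
    adom_skolemChase_subset (fun x hx => ⟨0, mem_level_zero.2 hx⟩)
      fun y ⟨n, hy⟩ _ _ _ => ⟨n + 1, apply_mem_level_succ hy⟩
  refine ⟨τ, skolemChase_subset_of_datalogClosed (J := {a | applyA τ a ∈ J}) (fun a ha => ?_)
    (hJ.preimage_applyA τ) fun y z hG hE => ?_⟩
  · have happly : applyA τ a = applyA σ a :=
      Prod.ext rfl (List.map_congr_left fun x hx => hτ x ⟨a, ha, hx⟩ 0)
    rw [Set.mem_ofPred_eq, happly]
    exact hσ a ha
  · obtain ⟨n, x, hx, rfl⟩ := hadom ⟨_, hG.1, List.mem_cons_self⟩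
    have hsucc := hp _ _ hG.2 hE.2
    have hfy : p (applyT τ (f^[n] x)) = applyT τ (f (f^[n] x)) := by
      rw [← Function.iterate_succ_apply' f, hτ x hx, hτ x hx, Function.iterate_succ_apply']
    rw [hfy] at hsucc
    exact ⟨hsucc.s0, hsucc.r, hsucc.t⟩

end Universality

/-! ### Machines that do not halt -/

section NotHalts

variable {M : TCM} {J : Set Atom} {y : ℕ → FTerm} {n : ℕ}

lemma sPath_of_forall_mem {u : ℕ → FTerm} (hu : ∀ d, (pS, [u d, u (d + 1)]) ∈ J) (d : ℕ) :
    SPath J n (u d) (u (d + n)) :=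
  sPath_iff_exists_vertices.2 ⟨fun j => u (d + j), rfl, rfl, fun j _ => hu (d + j)⟩

/-- A sequence whose first term satisfies `End` and whose terms up to `n` arise successively by
rule (9). -/
structure IsSuccessorChain (M : TCM) (J : Set Atom) (y : ℕ → FTerm) (n : ℕ) : Prop where
  end_mem : (pEnd, [y 0]) ∈ J
  isSuccessor : ∀ j < n, IsSuccessor M J (y j) (y (j + 1))

namespace IsSuccessorChain

/-- Truncated subtraction models the loop `S (y 0) (y 0)` at the end of the chain. -/
lemma s_mem (h : IsSuccessorChain M J y n) (hJ : DatalogClosed M J) (d : ℕ) :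
    (pS, [y (n - d), y (n - (d + 1))]) ∈ J := by
  rcases Nat.lt_or_ge d n with hd | hd
  · rw [show n - d = n - (d + 1) + 1 by omega]
    exact hJ.s_of_s0 _ _ (h.isSuccessor _ (by omega)).s0
  · rw [show n - d = 0 by omega, show n - (d + 1) = 0 by omega]
    exact hJ.s_of_end _ h.end_mem

lemma r_zero_mem_and_t_mem (h : IsSuccessorChain M J y n) (hJ : DatalogClosed M J) :
    (pR 0, [y n, y n]) ∈ J ∧ ∀ i < M.p, (pT i, [y n, y n, y n]) ∈ J := by
  cases n with
  | zero =>
    have hflood := hJ.flood_of_s _ _ (hJ.s_of_end _ h.end_mem)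
    have hgen := (hJ.of_flood _ _ _ hflood hflood hflood).2
    exact ⟨(hgen 0 M.p_pos).1, fun i hi => (hgen i hi).2⟩
  | succ n =>
    have hsucc := h.isSuccessor n n.lt_succ_self
    exact ⟨hsucc.r, hsucc.t⟩

lemma r_mem (h : IsSuccessorChain M J y n) (hJ : DatalogClosed M J) (d : ℕ) :
    (pR (d % M.p), [y n, y (n - d)]) ∈ J := by
  induction d with
  | zero => simpa using (h.r_zero_mem_and_t_mem hJ).1
  | succ d ih => simpa using hJ.r_succ _ (Nat.mod_lt d M.p_pos) _ _ _ ih (h.s_mem hJ d)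

lemma t_mem (h : IsSuccessorChain M J y n) (hJ : DatalogClosed M J) {i : ℕ} (hi : i < M.p) (k : ℕ) :
    (pT i, [y n, y (n - M.ri i * k), y (n - M.qi i * k)]) ∈ J := by
  induction k with
  | zero => simpa using (h.r_zero_mem_and_t_mem hJ).2 i hi
  | succ k ih =>
    have hpath l d : SPath J l (y (n - d)) (y (n - (d + l))) :=
      sPath_of_forall_mem (u := fun d => y (n - d)) (h.s_mem hJ) d
    exact hJ.t_shift i hi _ _ _ _ _ ih (hpath _ _) (hpath _ _)

lemma g_gIter_mem (h : IsSuccessorChain M J y n) (hJ : DatalogClosed M J) (hM : ¬ M.Halts) (k : ℕ) :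
    (pG, [y n, y (n - M.gIter k)]) ∈ J := by
  induction k with
  | zero => exact hJ.g_of_sPath _ _ ⟨_, h.s_mem hJ 0, _, h.s_mem hJ 1, rfl⟩
  | succ k ih =>
    have hi : M.gIter k % M.p < M.p := Nat.mod_lt _ M.p_pos
    obtain ⟨c, hc⟩ := M.ri_dvd_gIter_of_not_halts hM k
    have hT := h.t_mem hJ hi c
    rw [← hc, ← M.gIter_succ_of_gIter_eq_mul hc] at hT
    exact hJ.g_step _ hi _ _ _ ih (h.r_mem hJ _) hT

lemma g_zero_mem (h : IsSuccessorChain M J y n) (hJ : DatalogClosed M J) (hM : ¬ M.Halts) :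
    (pG, [y n, y 0]) ∈ J := by
  simpa [Nat.sub_eq_zero_of_le (M.le_gIter_of_not_halts hM n)] using h.g_gIter_mem hJ hM n

end IsSuccessorChain

lemma exists_forall_isSuccessorChain (hM : ¬ M.Halts) (hJ : DatalogClosed M J)
    (hex : ∀ y z, (pG, [y, z]) ∈ J → (pEnd, [z]) ∈ J → ∃ x, IsSuccessor M J y x)
    {w : FTerm} (hw : (pEnd, [w]) ∈ J) :
    ∃ y : ℕ → FTerm, y 0 = w ∧ ∀ n, IsSuccessorChain M J y n := by
  have exists_witness : ∀ y, ∃ x, (pG, [y, w]) ∈ J → IsSuccessor M J y x := fun y => by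
    by_cases hG : (pG, [y, w]) ∈ J
    · exact (hex y w hG hw).imp fun _ hx _ => hx
    · exact ⟨y, fun h => absurd h hG⟩
  choose p hp using exists_witness
  refine ⟨fun n => p^[n] w, rfl, fun n => ⟨hw, ?_⟩⟩
  induction n with
  | zero => simp
  | succ n ih =>
    rw [Nat.forall_lt_succ_right]
    refine ⟨ih, ?_⟩
    rw [Function.iterate_succ_apply']
    exact hp _ (IsSuccessorChain.g_zero_mem (y := fun n => p^[n] w) ⟨hw, ih⟩ hJ hM)

/-- A model of `{End(w)}` in which `S₀` is the graph of `f`; all other relations are total. It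
tells the terms of a chain apart. -/
def graphInterpretation (f : FTerm → FTerm) : Interpretation where
  endP x := x = wC
  flood _ := True
  s0 x y := x = f y
  s _ _ := True
  g _ _ := True
  r _ _ _ := True
  t _ _ _ _ := True

lemma skolemClosed_graphInterpretation (f : FTerm → FTerm) :
    SkolemClosed M f (graphInterpretation f).atoms := by
  constructor
  · constructor <;> simp [graphInterpretation, -Sum.forall]
  · intro y z _ _
    constructor <;> simp [graphInterpretation]

lemma injective_of_forall_isSuccessorChain (hy : ∀ n, IsSuccessorChain M J y n) (hy0 : y 0 = wC)
    {f : FTerm → FTerm} (hf : IsFreeOver f {wC})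
    (hJ : HomBetween J (graphInterpretation f).atoms) : Function.Injective y := by
  obtain ⟨σ, hσ⟩ := hJ
  have apply_mem_level : ∀ n, applyT σ (y n) ∈ level f {wC} n := fun n => by
    induction n with
    | zero => exact ⟨wC, rfl, by rw [hy0]; rfl⟩
    | succ n ih =>
      have hs0 := hσ _ ((hy (n + 1)).isSuccessor n n.lt_succ_self).s0
      have hfn : applyT σ (y (n + 1)) = f (applyT σ (y n)) :=
        Interpretation.s0_mem_atoms.1 hs0
      exact hfn ▸ apply_mem_level_succ ih
  exact fun m n hmn => hf.eq_of_mem_level (apply_mem_level m) (hmn ▸ apply_mem_level n)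

lemma pairwise_gaifmanAdj_range_of_isSuccessorChain (hJ : DatalogClosed M J)
    (hy : ∀ n, IsSuccessorChain M J y n) : (Set.range y).Pairwise (gaifmanAdj J) := by
  rintro _ ⟨m, rfl⟩ _ ⟨n, rfl⟩ hne
  refine ⟨hne, ?_⟩
  rcases le_total m n with hmn | hnm
  · exact ⟨_, (hy n).r_mem hJ (n - m), by simp [Nat.sub_sub_self hmn], by simp⟩
  · exact ⟨_, (hy m).r_mem hJ (m - n), by simp, by simp [Nat.sub_sub_self hnm]⟩

lemma halts_of_isBts (h : IsBts (RM M)) : M.Halts := by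
  by_contra hM
  obtain ⟨k, U, ⟨⟨hsat, _, hσ⟩, huniv⟩, htw⟩ := h {(pEnd, [wC])}
  obtain ⟨hU, hex⟩ := forall_mem_RM_satisfiesRule_iff.1 hsat
  have hEnd : (pEnd, [wC]) ∈ U := hσ (pEnd, [wC]) (by simp)
  obtain ⟨y, hy0, hy⟩ := exists_forall_isSuccessorChain hM hU hex hEnd
  obtain ⟨f, hf, -⟩ := exists_isFreeOver (Set.finite_singleton wC)
  have hmodel : IsModel (RM M) ({(pEnd, [wC])} : Finset Atom) (graphInterpretation f).atoms :=
    (skolemClosed_graphInterpretation f).isModel (by simp [graphInterpretation])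
  have hinj := injective_of_forall_isSuccessorChain hy hy0 hf (huniv _ hmodel)
  exact Set.infinite_range_of_injective hinj
    (htw.finite_of_pairwise_gaifmanAdj (pairwise_gaifmanAdj_range_of_isSuccessorChain hU hy))

end NotHalts

/-! ### Machines that halt -/

section Halts

variable {M : TCM} {f : FTerm → FTerm} {A : Set FTerm} {N : ℕ}

/-- An over-approximation of the Skolem chase over the terms `A`. Relations that start in a term
of depth `N` record the number `d` of `S`-steps from there to their last argument, which is then
at depth `N - d`: the truncated subtraction accounts for the unlimited steps inside `A`. -/
def depthInterpretation (M : TCM) (f : FTerm → FTerm) (A : Set FTerm) (N : ℕ) :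
    Interpretation where
  endP x := x ∈ A
  flood x := x ∉ level f A N
  s0 x y := (x ∈ A ∧ y ∈ A ∨ x = f y) ∧ y ∉ level f A N
  s x y := (x ∈ A ∧ y ∈ A ∨ x = f y) ∧ y ∉ level f A N
  g x y := x ∈ level f A N → ∃ k, y ∈ level f A (N - M.gIter k)
  r i x y := x ∈ level f A N → ∃ d, d % M.p = i ∧ y ∈ level f A (N - d)
  t i x y z := x ∈ level f A N →
    ∃ k, y ∈ level f A (N - M.ri i * k) ∧ z ∈ level f A (N - M.qi i * k)

lemma exists_gIter_mem_level (hf : IsFreeOver f A) (hN : ∀ k, M.gIter k < N) {i k d l : ℕ}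
    {y z : FTerm} (hk : y ∈ level f A (N - M.gIter k)) (hd : y ∈ level f A (N - d))
    (hdi : d % M.p = i) (hy : y ∈ level f A (N - M.ri i * l))
    (hz : z ∈ level f A (N - M.qi i * l)) : ∃ k, z ∈ level f A (N - M.gIter k) := by
  have hkN := hN k
  obtain rfl : M.gIter k = d := by
    have := hf.eq_of_mem_level hk hd
    omega
  have hri : M.gIter k = M.ri i * l := by
    have := hf.eq_of_mem_level hk hy
    omega
  subst hdi
  exact ⟨k + 1, by rwa [M.gIter_succ_of_gIter_eq_mul hri]⟩

lemma mem_level_of_s_mem (hf : IsFreeOver f A) {d : ℕ} {u v : FTerm}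
    (huv : (pS, [u, v]) ∈ (depthInterpretation M f A N).atoms) (hu : u ∈ level f A (N - d)) :
    v ∈ level f A (N - (d + 1)) :=
  hf.mem_level_sub_one hu (Interpretation.s_mem_atoms.1 huv).1

lemma mem_level_of_sPath (hf : IsFreeOver f A) {n d : ℕ} {u v : FTerm}
    (hp : SPath (depthInterpretation M f A N).atoms n u v) (hu : u ∈ level f A (N - d)) :
    v ∈ level f A (N - (d + n)) :=
  hp.add_right (P := fun d u => u ∈ level f A (N - d)) (fun _ _ _ => mem_level_of_s_mem hf) hu

lemma datalogClosed_depthInterpretation (hf : IsFreeOver f A) (hN : ∀ k, M.gIter k < N) :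
    DatalogClosed M (depthInterpretation M f A N).atoms := by
  constructor
  case s_of_s0 => exact fun _ _ h => by simpa [depthInterpretation] using h
  case flood_of_s =>
    exact fun _ _ h => Interpretation.flood_mem_atoms.2 (Interpretation.s_mem_atoms.1 h).2
  case s_of_end =>
    simp only [Interpretation.endP_mem_atoms, Interpretation.s_mem_atoms]
    exact fun x hx => ⟨.inl ⟨hx, hx⟩, hf.notMem_level hx (Nat.zero_lt_of_lt (hN 0))⟩
  case of_flood =>
    simp only [Interpretation.flood_mem_atoms, Interpretation.g_mem_atoms,
      Interpretation.r_mem_atoms, Interpretation.t_mem_atoms]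
    exact fun _ _ _ hx _ _ => ⟨fun h => absurd h hx, fun _ _ =>
      ⟨fun h => absurd h hx, fun h => absurd h hx⟩⟩
  case g_of_sPath =>
    exact fun x y hp => Interpretation.g_mem_atoms.2 fun hx => ⟨0, by
      simpa [TCM.gIter] using mem_level_of_sPath hf (d := 0) hp hx⟩
  case r_succ =>
    simp only [Interpretation.r_mem_atoms]
    intro i _ x y z hR hS hx
    obtain ⟨d, rfl, hd⟩ := hR hx
    exact ⟨d + 1, (Nat.mod_add_mod d _ 1).symm, mem_level_of_s_mem hf hS hd⟩
  case t_shift =>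
    simp only [Interpretation.t_mem_atoms]
    intro i _ x y z y' z' hT hy hz hx
    obtain ⟨k, hky, hkz⟩ := hT hx
    exact ⟨k + 1, mem_level_of_sPath hf hy hky, mem_level_of_sPath hf hz hkz⟩
  case g_step =>
    simp only [Interpretation.g_mem_atoms, Interpretation.r_mem_atoms,
      Interpretation.t_mem_atoms]
    intro i _ x y z hG hR hT hx
    obtain ⟨k, hk⟩ := hG hx
    obtain ⟨d, hdi, hd⟩ := hR hx
    obtain ⟨l, hy, hz⟩ := hT hx
    exact exists_gIter_mem_level hf hN hk hd hdi hy hz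

/-- An `End` atom needs depth `0`, which `G` does not reach from depth `N` as `N` exceeds the
orbit. -/
lemma notMem_level_of_g_mem_of_end_mem (hf : IsFreeOver f A) (hN : ∀ k, M.gIter k < N)
    {y z : FTerm} (hG : (pG, [y, z]) ∈ (depthInterpretation M f A N).atoms)
    (hE : (pEnd, [z]) ∈ (depthInterpretation M f A N).atoms) : y ∉ level f A N := by
  intro hy
  obtain ⟨k, hk⟩ := Interpretation.g_mem_atoms.1 hG hy
  have hz := hf.eq_of_mem_level hk (mem_level_zero.2 (Interpretation.endP_mem_atoms.1 hE))
  have := hN k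
  omega

lemma skolemClosed_depthInterpretation (hf : IsFreeOver f A) (hN : ∀ k, M.gIter k < N) :
    SkolemClosed M f (depthInterpretation M f A N).atoms where
  toDatalogClosed := datalogClosed_depthInterpretation hf hN
  isSuccessor _ _ hG hE :=
    { s0 := Interpretation.s0_mem_atoms.2
        ⟨.inr rfl, notMem_level_of_g_mem_of_end_mem hf hN hG hE⟩
      r := Interpretation.r_mem_atoms.2 fun hy => ⟨0, Nat.zero_mod _, hy⟩
      t := fun _ _ => Interpretation.t_mem_atoms.2 fun hy => ⟨0, hy, hy⟩ }

lemma subset_depthInterpretation {I : Set Atom} (hf : IsFreeOver f (adom I)) (hN : 0 < N) :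
    I ⊆ (depthInterpretation M f (adom I) N).atoms := by
  intro a ha
  have mem_adom {x} (hx : x ∈ a.2) : x ∈ adom I := ⟨a, ha, hx⟩
  have notMem_level {x} (hx : x ∈ a.2) : x ∉ level f (adom I) N := hf.notMem_level (mem_adom hx) hN
  refine ⟨?_, ?_, ?_, ?_, ?_, ?_, ?_⟩
  · rintro x rfl
    exact mem_adom (by simp)
  · rintro x rfl
    exact notMem_level (by simp)
  iterate 2
    rintro x y rfl
    exact ⟨.inl ⟨mem_adom (by simp), mem_adom (by simp)⟩, notMem_level (by simp)⟩
  · rintro x y rfl hx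
    exact absurd hx (notMem_level (by simp))
  · rintro i x y rfl hx
    exact absurd hx (notMem_level (by simp))
  · rintro i x y z rfl hx
    exact absurd hx (notMem_level (by simp))

lemma adom_skolemChase_subset_iUnion_level {I : Set Atom} (hf : IsFreeOver f (adom I))
    (hN : ∀ k, M.gIter k < N) :
    adom (skolemChase M f I) ⊆ ⋃ n ∈ Set.Iic N, level f (adom I) n := by
  have hchase := skolemChase_subset (subset_depthInterpretation hf (Nat.zero_lt_of_lt (hN 0)))
    (skolemClosed_depthInterpretation hf hN)
  refine adom_skolemChase_subset
    (fun x hx => Set.mem_biUnion (Nat.zero_le N) (mem_level_zero.2 hx)) fun y hy z hG hE => ?_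
  obtain ⟨n, hn, hyn⟩ := Set.mem_iUnion₂.1 hy
  have hyN := notMem_level_of_g_mem_of_end_mem hf hN (hchase hG) (hchase hE)
  have hnN : n < N := lt_of_le_of_ne hn fun h => hyN (h ▸ hyn)
  exact Set.mem_biUnion (show n + 1 ∈ Set.Iic N from hnN) (apply_mem_level_succ hyn)

lemma isBts_of_halts (hM : M.Halts) : IsBts (RM M) := by
  intro I
  obtain ⟨f, hf, hvar⟩ := exists_isFreeOver (finite_adom_coe I)
  obtain ⟨B, hB⟩ := (M.Gset_finite_of_halts hM).bddAbove
  have hN k : M.gIter k < B + 1 := Nat.lt_succ_of_le (hB ⟨k, rfl⟩)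
  have hfin : (adom (skolemChase M f (I : Set Atom))).Finite :=
    ((Set.finite_Iic (B + 1)).biUnion fun n _ => (finite_adom_coe I).image f^[n]).subset
      (adom_skolemChase_subset_iUnion_level hf hN)
  obtain ⟨k, hk⟩ := exists_treewidthAtMost_of_finite_adom hfin
  exact ⟨k, _, isUniversalModel_skolemChase hf hvar, hk⟩

end Halts

/-- `R_M` is bts iff `M` halts. -/
theorem stmt_7 (M : TCM) : IsBts (RM M) ↔ M.Halts :=
  ⟨halts_of_isBts, isBts_of_halts⟩

end
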